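/- arXiv:2212.07670 — 3 statements merged into one kernel-verified Lean document; each statement's English description precedes it below -/
import Mathlib

section
/- Two locally finite small trees are isomorphic if and only if they are minors of each other. -/
/-!
The nontrivial direction is that two locally finite small trees `T`, `S` which are minors of each
other are isomorphic.

*From minors to contractions.* Deleting from `S` the edges that join distinct branch sets leaves
components each of which contains exactly one branch set. Sending a component to its branch set
is a map `φ : W → V` presenting `T` as a contraction of `S` (`exists_contr`): every edge of `T`
lifts to `S`, and the two sides of a lift are the preimages of the sides below.

*The core.* Call an oriented edge a bare ray tail (`RD`) if all vertices beyond it have degree two,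
and let the core be the set of vertices lying on no bare ray tail. If the core were infinite, local
finiteness would yield a ray all of whose tails separate infinitely many core vertices from its
start; smallness makes such a ray eventually bare, a contradiction (`core_finite`). So a locally
finite small tree is its finite core together with finitely many bare rays attached to it
(`roots`), or else a double ray, where the core is empty.

*Comparing cores.* Let `φ`, `ψ` be contractions in both directions. Each of the following steps
uses that injections in both directions between finite sets are bijections.

* Edges with branching vertices on both sides lift to such edges (`Contr.br_lift`), so only they do
  (`brEdges_reflect`), and hence bare ray tails lift to bare ray tails (`rd_lift`). In particular
  `φ` maps core to core (`core_map`).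
* Disjoint tails have disjoint lifts, so the maximal tails of `T` and `S` correspond bijectively
  (`exists_rootBij`). Hence no other edge lifts to a bare ray tail (`rd_down`).
* Thus the edges within the two cores correspond bijectively, so `φ` contracts none of those in
  `S` (`kern_ne`) and restricts to an isomorphism between the cores (`core_bijOn`,
  `core_adj_iff`), with corresponding rays attached at corresponding vertices (`rootRel_fst`).

The isomorphism of cores is then extended along the rays (`glue`). If one core is empty then so is
the other, and both trees are double rays (`line_iso`).
-/

open SimpleGraph

/-- A ray in a graph: a one-way infinite path. -/
def IsRay {V : Type*} (G : SimpleGraph V) (f : ℕ → V) : Prop :=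
  Function.Injective f ∧ ∀ n, G.Adj (f n) (f (n + 1))

/-- The degree of a vertex, as an extended natural number. -/
noncomputable def eDeg {V : Type*} (G : SimpleGraph V) (v : V) : ℕ∞ :=
  (G.neighborSet v).encard

/-- A ray is eventually bare if from some index on all its vertices have degree 2. -/
def EventuallyBare {V : Type*} (G : SimpleGraph V) (f : ℕ → V) : Prop :=
  ∃ M : ℕ, ∀ n ≥ M, eDeg G (f n) = 2

/-- A tree is small if every ray in it is eventually bare. -/
def IsSmall {V : Type*} (G : SimpleGraph V) : Prop :=
  ∀ f : ℕ → V, IsRay G f → EventuallyBare G f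

/-- A minor model of `T` in `S`: pairwise disjoint nonempty connected branch sets,
every edge of `T` witnessed by an edge of `S` between the corresponding branch sets. -/
structure IsModel {V W : Type*} (T : SimpleGraph V) (S : SimpleGraph W)
    (μ : V → Set W) : Prop where
  nonempty : ∀ v, (μ v).Nonempty
  connected : ∀ v, (S.induce (μ v)).Connected
  disjoint : ∀ v w, v ≠ w → Disjoint (μ v) (μ w)
  edge : ∀ v w, T.Adj v w → ∃ a ∈ μ v, ∃ b ∈ μ w, S.Adj a b

/-- `T` is a minor of `S`. -/
def IsMinorOf {V W : Type*} (T : SimpleGraph V) (S : SimpleGraph W) : Prop :=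
  ∃ μ : V → Set W, IsModel T S μ

/-- Tree order relative to a root: `v` lies on the (unique) path from `r` to `w`. -/
def treeLE {V : Type*} (G : SimpleGraph V) (r v w : V) : Prop :=
  v = w ∨ ∃ p : G.Walk r w, p.IsPath ∧ v ∈ p.support

/-- Closure of a vertex set: the set together with all vertices on paths joining its members. -/
def treeClosure {V : Type*} (G : SimpleGraph V) (A : Set V) : Set V :=
  A ∪ {x | ∃ a ∈ A, ∃ b ∈ A, ∃ p : G.Walk a b, p.IsPath ∧ x ∈ p.support}


namespace SmallTree

/-! ### Sides of edges -/

section Sides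
variable {V : Type*} {G : SimpleGraph V}

/-- The side of the edge `xy` containing `y`: the component of `y` once the edge is deleted. -/
def side (G : SimpleGraph V) (x y : V) : Set V :=
  {z | (G.deleteEdges {s(x, y)}).Reachable y z}

lemma side_self (x y : V) : y ∈ side G x y := Reachable.refl y

lemma side_step {x y p q : V} (hp : p ∈ side G x y) (h : G.Adj p q)
    (hne : s(p, q) ≠ s(x, y)) : q ∈ side G x y :=
  Reachable.trans hp (Adj.reachable (by simp [deleteEdges_adj, h, hne]))

/-- A set that is closed under steps inside a graph contains everything reachable from
one of its points. -/
lemma reach_induct {H : SimpleGraph V} {X : Set V} {y z : V} (h : H.Reachable y z) (hy : y ∈ X)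
    (hX : ∀ p q, H.Reachable y p → p ∈ X → H.Adj p q → q ∈ X) : z ∈ X := by
  rw [reachable_iff_reflTransGen] at h
  induction h with
  | refl => exact hy
  | tail hp hpq ih => exact hX _ _ (by rwa [reachable_iff_reflTransGen]) ih hpq

lemma side_induct {X : Set V} {x y : V} (hy : y ∈ X)
    (hX : ∀ p q, p ∈ side G x y → p ∈ X → G.Adj p q → s(p, q) ≠ s(x, y) → q ∈ X) :
    side G x y ⊆ X := by
  intro z hz
  refine reach_induct hz hy fun p q hp hpX hpq => ?_
  rw [deleteEdges_adj] at hpq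
  exact hX p q hp hpX hpq.1 (by simpa using hpq.2)

lemma side_total (hG : G.IsTree) (x y z : V) : z ∈ side G x y ∨ z ∈ side G y x := by
  have := reach_induct (X := side G x y ∪ side G y x) (hG.1.preconnected y z)
    (Or.inl (side_self x y)) ?_
  · exact this
  · intro p q _ hp hpq
    by_cases he : s(p, q) = s(x, y)
    · rw [Sym2.eq_iff] at he
      rcases he with ⟨-, rfl⟩ | ⟨-, rfl⟩
      · exact Or.inl (side_self _ _)
      · exact Or.inr (side_self _ _)
    · rcases hp with hp | hp
      · exact Or.inl (side_step hp hpq he)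
      · exact Or.inr (side_step hp hpq (by rwa [Sym2.eq_swap (a := y)]))

lemma side_disj (hG : G.IsTree) {x y z : V} (h : G.Adj x y) (h1 : z ∈ side G x y)
    (h2 : z ∈ side G y x) : False := by
  have hb := (isAcyclic_iff_forall_adj_isBridge.1 hG.2) h
  rw [isBridge_iff] at hb
  apply hb
  unfold side at h1 h2
  rw [Set.mem_ofPred_eq] at h1 h2
  rw [Sym2.eq_swap] at h2
  exact h2.trans h1.symm

lemma side_compl (hG : G.IsTree) {x y z : V} (h : G.Adj x y) :
    z ∉ side G x y ↔ z ∈ side G y x :=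
  ⟨fun h1 => (side_total hG x y z).resolve_left h1, fun h2 h1 => side_disj hG h h1 h2⟩

lemma not_mem_side (hG : G.IsTree) {x y : V} (h : G.Adj x y) : x ∉ side G x y :=
  (side_compl hG h).2 (side_self _ _)

/-- A side can only be left across its own edge. -/
lemma side_exit (hG : G.IsTree) {x y p q : V} (h : G.Adj x y) (hp : p ∈ side G x y)
    (hpq : G.Adj p q) (hq : q ∉ side G x y) : p = y ∧ q = x := by
  by_contra hne
  apply hq
  refine side_step hp hpq fun he => ?_
  rw [Sym2.eq_iff] at he
  rcases he with ⟨rfl, rfl⟩ | ⟨rfl, rfl⟩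
  · exact not_mem_side hG h hp
  · exact hne ⟨rfl, rfl⟩

/-- An edge `ab` with `b` beyond `xy` that points away from `x` cuts off less than `xy`. -/
lemma side_nest (hG : G.IsTree) {x y a b : V} (h : G.Adj x y) (h' : G.Adj a b)
    (hx : x ∈ side G b a) (hb : b ∈ side G x y) : side G a b ⊆ side G x y := by
  have key : side G y x ⊆ side G b a := by
    refine side_induct hx fun p q hp hpX hpq hne => ?_
    by_contra hq
    obtain ⟨-, rfl⟩ := side_exit hG h'.symm hpX hpq hq
    exact side_disj hG h hb (side_step hp hpq hne)
  intro z hz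
  by_contra hzn
  exact side_disj hG h' hz (key ((side_compl hG h).1 hzn))

lemma side_sub (hG : G.IsTree) {p c n : V} (h : G.Adj p c) (h' : G.Adj c n) (hn : n ≠ p) :
    side G c n ⊆ side G p c := by
  refine side_nest hG h h' (side_step (side_self n c) h.symm ?_)
    (side_step (side_self p c) h' ?_)
  · simp [Ne.symm hn, h'.ne]
  · simp [hn, h.ne.symm]

/-- Any vertex other than `c` lies beyond one of the edges at `c`. -/
lemma exists_side (hG : G.IsTree) {c z : V} (hz : z ≠ c) : ∃ n, G.Adj c n ∧ z ∈ side G c n := by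
  have := reach_induct (X := {z | z ≠ c → ∃ n, G.Adj c n ∧ z ∈ side G c n})
    (hG.1.preconnected c z) (fun h => absurd rfl h) ?_
  · exact this hz
  · intro p q _ hp hpq hq
    by_cases hpc : p = c
    · subst hpc
      exact ⟨q, hpq, side_self _ _⟩
    · obtain ⟨n, hn, hpn⟩ := hp hpc
      refine ⟨n, hn, side_step hpn hpq fun he => ?_⟩
      rw [Sym2.eq_iff] at he
      rcases he with ⟨h, -⟩ | ⟨-, h⟩
      · exact hpc h
      · exact hq h

/-- Moving from `q` across the edge behind which `z` lies brings us closer to `z`. -/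
lemma dist_lt (hG : G.IsTree) {q t z : V} (h : G.Adj q t) (hz : z ∈ side G q t) :
    G.dist t z < G.dist q z := by
  have key : ∀ {u z : V} (w : G.Walk u z), u ∉ side G q t → z ∈ side G q t →
      G.dist t z < w.length := by
    intro u z w
    induction w with
    | nil => intro h1 h2; exact absurd h2 h1
    | @cons u u' z huu' w ih =>
      intro h1 h2
      by_cases h3 : u' ∈ side G q t
      · obtain ⟨rfl, -⟩ := side_exit hG h h3 huu'.symm h1
        exact Nat.lt_succ_of_le (dist_le w)
      · exact (ih h3 h2).trans (by simp)
  obtain ⟨w, hw⟩ := hG.1.exists_walk_length_eq_dist q z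
  rw [← hw]
  exact key w (not_mem_side hG h) hz

/-- If neither side contains the head of the other edge, the two sides are disjoint. -/
lemma side_apart (hG : G.IsTree) {x y a b z : V} (h' : G.Adj a b)
    (hb : b ∉ side G x y) (hy : y ∉ side G a b) (hz : z ∈ side G x y) : z ∉ side G a b := by
  rw [side_compl hG h'] at hy ⊢
  refine side_induct (X := side G b a) hy (fun p q hp hpX hpq hne => ?_) hz
  by_contra hq
  obtain ⟨-, rfl⟩ := side_exit hG h'.symm hpX hpq hq
  exact hb (side_step hp hpq hne)

end Sides

/-! ### Bare rays -/

section Rays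
variable {V : Type*} {G : SimpleGraph V}

/-- A branching vertex: one with three distinct neighbours. -/
def Br (G : SimpleGraph V) (v : V) : Prop :=
  ∃ a b c, G.Adj v a ∧ G.Adj v b ∧ G.Adj v c ∧ a ≠ b ∧ a ≠ c ∧ b ≠ c

/-- A vertex of degree two. -/
def Deg2 (G : SimpleGraph V) (v : V) : Prop :=
  ∃ a b, a ≠ b ∧ ∀ c, G.Adj v c ↔ c = a ∨ c = b

/-- The oriented edge `xy` starts a bare ray: all vertices beyond it have degree two. -/
def RD (G : SimpleGraph V) (x y : V) : Prop :=
  G.Adj x y ∧ ∀ z ∈ side G x y, Deg2 G z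

/-- The vertices that lie on no bare ray tail. -/
def core (G : SimpleGraph V) : Set V := {v | ∀ x y, RD G x y → v ∉ side G x y}

/-- A non-backtracking infinite walk. -/
def NB (G : SimpleGraph V) (f : ℕ → V) : Prop :=
  ∀ n, G.Adj (f n) (f (n + 1)) ∧ f (n + 2) ≠ f n

/-- An infinite walk passing straight through vertices of degree two (except perhaps the
first vertex). -/
def Chain (G : SimpleGraph V) (f : ℕ → V) : Prop :=
  ∀ n, f (n + 2) ≠ f n ∧ ∀ z, G.Adj (f (n + 1)) z ↔ z = f n ∨ z = f (n + 2)

lemma Chain.nb {f : ℕ → V} (h : Chain G f) : NB G f := fun n =>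
  ⟨(((h n).2 _).2 (Or.inl rfl)).symm, (h n).1⟩

lemma NB.side_anti (hG : G.IsTree) {f : ℕ → V} (h : NB G f) (n m : ℕ) :
    side G (f (n + m)) (f (n + m + 1)) ⊆ side G (f n) (f (n + 1)) := by
  induction m with
  | zero => exact subset_rfl
  | succ m ih =>
    exact (side_sub hG (h (n + m)).1 (h (n + m + 1)).1 (h (n + m)).2).trans ih

lemma NB.mem_side (hG : G.IsTree) {f : ℕ → V} (h : NB G f) (n m : ℕ) :
    f (n + m + 1) ∈ side G (f n) (f (n + 1)) := h.side_anti hG n m (side_self _ _)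

lemma NB.injective (hG : G.IsTree) {f : ℕ → V} (h : NB G f) : Function.Injective f := by
  refine Function.Injective.of_lt_imp_ne fun n m hnm he => ?_
  obtain ⟨k, rfl⟩ := Nat.exists_eq_add_of_lt hnm
  have := h.mem_side hG n k
  rw [← he] at this
  exact not_mem_side hG (h n).1 this

lemma Chain.mem_side_iff (hG : G.IsTree) {f : ℕ → V} (h : Chain G f) (n : ℕ) (z : V) :
    z ∈ side G (f n) (f (n + 1)) ↔ ∃ m, z = f (n + m + 1) := by
  constructor
  · intro hz
    refine side_induct (X := {z | ∃ m, z = f (n + m + 1)}) ⟨0, rfl⟩ ?_ hz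
    rintro p q - ⟨m, rfl⟩ hpq hne
    rcases ((h (n + m)).2 q).1 hpq with rfl | rfl
    · cases m with
      | zero => exact absurd Sym2.eq_swap hne
      | succ m => exact ⟨m, rfl⟩
    · exact ⟨m + 1, rfl⟩
  · rintro ⟨m, rfl⟩
    exact h.nb.mem_side hG n m

lemma Chain.deg2 {f : ℕ → V} (h : Chain G f) (n : ℕ) : Deg2 G (f (n + 1)) :=
  ⟨_, _, (h n).1.symm, (h n).2⟩

lemma Chain.rd (hG : G.IsTree) {f : ℕ → V} (h : Chain G f) (n : ℕ) :
    RD G (f n) (f (n + 1)) := by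
  refine ⟨(h.nb n).1, fun z hz => ?_⟩
  obtain ⟨m, rfl⟩ := (h.mem_side_iff hG n z).1 hz
  exact h.deg2 _

open Classical in
/-- The continuation of a walk that has just stepped from `p` to `c`. -/
noncomputable def nxt (G : SimpleGraph V) (p c : V) : V :=
  if h : ∃ z, G.Adj c z ∧ z ≠ p then h.choose else c

/-- The consecutive pairs of the walk that starts with `x, y` and never turns back. -/
noncomputable def rayPair (G : SimpleGraph V) (x y : V) : ℕ → V × V
  | 0 => (x, y)
  | n + 1 => ((rayPair G x y n).2, nxt G (rayPair G x y n).1 (rayPair G x y n).2)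

/-- The walk that starts with `x, y` and never turns back. -/
noncomputable def rayF (G : SimpleGraph V) (x y : V) (n : ℕ) : V := (rayPair G x y n).1

@[simp] lemma rayF_zero (x y : V) : rayF G x y 0 = x := rfl
@[simp] lemma rayF_one (x y : V) : rayF G x y 1 = y := rfl

lemma rayF_add_two (x y : V) (n : ℕ) :
    rayF G x y (n + 2) = nxt G (rayF G x y n) (rayF G x y (n + 1)) := rfl

/-- If a property of oriented edges guarantees a unique continuation with the same property,
then the walk starting at such an edge is a chain. -/
lemma chain_of_inv (Q : V → V → Prop)
    (hQ : ∀ p c, Q p c → ∃ n, n ≠ p ∧ (∀ z, G.Adj c z ↔ z = p ∨ z = n) ∧ Q c n)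
    {x y : V} (h : Q x y) : Chain G (rayF G x y) := by
  have step : ∀ p c, Q p c → nxt G p c ≠ p ∧ (∀ z, G.Adj c z ↔ z = p ∨ z = nxt G p c) ∧
      Q c (nxt G p c) := by
    intro p c hpc
    obtain ⟨n, h1, h2, h3⟩ := hQ p c hpc
    have hex : ∃ z, G.Adj c z ∧ z ≠ p := ⟨n, (h2 n).2 (Or.inr rfl), h1⟩
    have : nxt G p c = n := by
      unfold nxt
      rw [dif_pos hex]
      exact ((h2 _).1 hex.choose_spec.1).resolve_left hex.choose_spec.2
    rw [this]
    exact ⟨h1, h2, h3⟩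
  have all : ∀ n, Q (rayF G x y n) (rayF G x y (n + 1)) := by
    intro n
    induction n with
    | zero => exact h
    | succ n ih => exact (step _ _ ih).2.2
  exact fun n => ⟨(step _ _ (all n)).1, (step _ _ (all n)).2.1⟩

lemma Deg2.other {c p : V} (h : Deg2 G c) (hp : G.Adj c p) :
    ∃ n, n ≠ p ∧ ∀ z, G.Adj c z ↔ z = p ∨ z = n := by
  obtain ⟨a, b, hab, h⟩ := h
  rcases (h p).1 hp with rfl | rfl
  · exact ⟨b, hab.symm, h⟩
  · exact ⟨a, hab, fun z => by rw [h z, or_comm]⟩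

lemma Deg2.not_br {v : V} (h : Deg2 G v) : ¬ Br G v := by
  obtain ⟨a, b, -, h⟩ := h
  rintro ⟨x, y, z, hx, hy, hz, h1, h2, h3⟩
  rw [h] at hx hy hz
  grind

lemma RD.chain (hG : G.IsTree) {x y : V} (h : RD G x y) : Chain G (rayF G x y) := by
  refine chain_of_inv (RD G) (fun p c hpc => ?_) h
  obtain ⟨n, h1, h2⟩ := (hpc.2 c (side_self _ _)).other hpc.1.symm
  have hcn := (h2 n).2 (Or.inr rfl)
  exact ⟨n, h1, h2, hcn, fun z hz => hpc.2 z (side_sub hG hpc.1 hcn h1 hz)⟩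

lemma RD.mem_side_iff (hG : G.IsTree) {x y : V} (h : RD G x y) (z : V) :
    z ∈ side G x y ↔ ∃ m, z = rayF G x y (m + 1) := by
  simpa using (h.chain hG).mem_side_iff hG 0 z

lemma RD.infinite (hG : G.IsTree) {x y : V} (h : RD G x y) : (side G x y).Infinite := by
  have : side G x y = Set.range fun m => rayF G x y (m + 1) := by
    ext z; rw [h.mem_side_iff hG]; simp [eq_comm]
  rw [this]
  exact Set.infinite_range_of_injective
    (((h.chain hG).nb.injective hG).comp (add_left_injective 1))

/-- An infinite side without branching vertices is a bare ray. -/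
lemma rd_of_infinite (hG : G.IsTree) {x y : V} (h : G.Adj x y) (hi : (side G x y).Infinite)
    (hb : ∀ z ∈ side G x y, ¬ Br G z) : RD G x y := by
  have hc : Chain G (rayF G x y) := by
    refine chain_of_inv
      (fun x y => G.Adj x y ∧ (side G x y).Infinite ∧ ∀ z ∈ side G x y, ¬ Br G z)
      (fun p c ⟨hpc, hi, hb⟩ => ?_) ⟨h, hi, hb⟩
    obtain ⟨u, hu, huc⟩ := hi.exists_notMem_finite (Set.finite_singleton c)
    obtain ⟨n, hcn, hun⟩ := exists_side hG huc
    have hnp : n ≠ p := by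
      rintro rfl
      exact side_disj hG hpc hu hun
    have h2 : ∀ z, G.Adj c z ↔ z = p ∨ z = n := by
      intro z
      constructor
      · intro hz
        by_contra hne
        push Not at hne
        exact hb c (side_self _ _) ⟨z, p, n, hz, hpc.symm, hcn, hne.1, hne.2, hnp.symm⟩
      · rintro (rfl | rfl)
        · exact hpc.symm
        · exact hcn
    refine ⟨n, hnp, h2, hcn, fun hfin => hi ((hfin.insert c).subset fun z hz => ?_),
      fun z hz => hb z (side_sub hG hpc hcn hnp hz)⟩
    by_cases hzc : z = c
    · exact Or.inl hzc
    · obtain ⟨m, hcm, hzm⟩ := exists_side hG hzc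
      rcases (h2 m).1 hcm with rfl | rfl
      · exact absurd hzm fun hzm => side_disj hG hpc hz hzm
      · exact Or.inr hzm
  simpa using hc.rd hG 0

/-- An oriented edge pointing outwards on a bare ray is a pair of consecutive vertices. -/
lemma RD.sub_eq (hG : G.IsTree) {x y a b : V} (h : RD G x y) (hab : G.Adj a b)
    (hs : side G a b ⊆ side G x y) :
    ∃ n, a = rayF G x y n ∧ b = rayF G x y (n + 1) := by
  obtain ⟨n, rfl⟩ := (h.mem_side_iff hG b).1 (hs (side_self _ _))
  refine ⟨n, ?_, rfl⟩
  have hc := h.chain hG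
  rcases ((hc n).2 a).1 hab.symm with rfl | rfl
  · rfl
  · exfalso
    refine not_mem_side hG h.1 (hs ((side_compl hG hab.symm).1 fun hx => ?_))
    have := hc.nb.side_anti hG 0 (n + 1)
    simp only [zero_add, rayF_zero, rayF_one] at this
    exact not_mem_side hG h.1 (this hx)

lemma RD.sub {x y a b : V} (h : RD G x y) (hab : G.Adj a b)
    (hs : side G a b ⊆ side G x y) : RD G a b :=
  ⟨hab, fun z hz => h.2 z (hs hz)⟩

/-- Two subrays of a bare ray are nested. -/
lemma RD.nested (hG : G.IsTree) {x y a b a' b' : V} (h : RD G x y) (hab : G.Adj a b)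
    (hab' : G.Adj a' b') (hs : side G a b ⊆ side G x y) (hs' : side G a' b' ⊆ side G x y) :
    side G a b ⊆ side G a' b' ∨ side G a' b' ⊆ side G a b := by
  obtain ⟨n, rfl, rfl⟩ := h.sub_eq hG hab hs
  obtain ⟨m, rfl, rfl⟩ := h.sub_eq hG hab' hs'
  have hc := (h.chain hG).nb
  rcases le_total n m with hnm | hnm
  · obtain ⟨k, rfl⟩ := Nat.exists_eq_add_of_le hnm
    exact Or.inr (hc.side_anti hG n k)
  · obtain ⟨k, rfl⟩ := Nat.exists_eq_add_of_le hnm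
    exact Or.inl (hc.side_anti hG m k)

end Rays

/-! ### The core -/

section Core
variable {V : Type*} {G : SimpleGraph V}

/-- The oriented edges that leave the core, one for each maximal bare ray tail. -/
def roots (G : SimpleGraph V) : Set (V × V) := {d | d.1 ∈ core G ∧ RD G d.1 d.2}

/-- The oriented edges that do not lie on a bare ray tail. -/
def kern (G : SimpleGraph V) : Set (V × V) :=
  {d | G.Adj d.1 d.2 ∧ ¬ RD G d.1 d.2 ∧ ¬ RD G d.2 d.1}

lemma not_mem_core {t : V} : t ∉ core G ↔ ∃ x y, RD G x y ∧ t ∈ side G x y := by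
  simp [core]

lemma core_exit (hG : G.IsTree) {s t : V} (hs : s ∈ core G) (ht : t ∉ core G)
    (h : G.Adj s t) : RD G s t := by
  obtain ⟨x, y, hr, htx⟩ := not_mem_core.1 ht
  obtain ⟨rfl, rfl⟩ := side_exit hG hr.1 htx h.symm (hs x y hr)
  exact hr

lemma exists_root (hG : G.IsTree) (hne : (core G).Nonempty) {t : V} (ht : t ∉ core G) :
    ∃ d ∈ roots G, t ∈ side G d.1 d.2 := by
  obtain ⟨s, hs⟩ := hne
  refine reach_induct (X := {t | t ∉ core G → ∃ d ∈ roots G, t ∈ side G d.1 d.2})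
    (hG.1.preconnected s t) (fun h => absurd hs h) ?_ ht
  intro p q _ hp hpq hq
  by_cases hpc : p ∈ core G
  · exact ⟨(p, q), ⟨hpc, core_exit hG hpc hq hpq⟩, side_self _ _⟩
  · obtain ⟨d, hd, hpd⟩ := hp hpc
    refine ⟨d, hd, ?_⟩
    by_contra hqd
    obtain ⟨-, rfl⟩ := side_exit hG hd.2.1 hpd hpq hqd
    exact hq hd.1

lemma root_unique (hG : G.IsTree) {d d' : V × V} (hd : d ∈ roots G) (hd' : d' ∈ roots G) {z : V}
    (h : z ∈ side G d.1 d.2) (h' : z ∈ side G d'.1 d'.2) : d = d' := by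
  by_cases h1 : d'.2 ∈ side G d.1 d.2
  · obtain ⟨h2, h3⟩ := side_exit hG hd.2.1 h1 hd'.2.1.symm (hd'.1 _ _ hd.2)
    exact Prod.ext h3.symm h2.symm
  by_cases h2 : d.2 ∈ side G d'.1 d'.2
  · obtain ⟨h2, h3⟩ := side_exit hG hd'.2.1 h2 hd.2.1.symm (hd.1 _ _ hd'.2)
    exact Prod.ext h3 h2
  exact absurd h' (side_apart hG hd'.2.1 h1 h2 h)

lemma root_sub (hG : G.IsTree) (hne : (core G).Nonempty) {a b : V} (h : RD G a b) :
    ∃ d ∈ roots G, side G a b ⊆ side G d.1 d.2 := by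
  have hb : b ∉ core G := fun hb => hb a b h (side_self _ _)
  obtain ⟨d, hd, hbd⟩ := exists_root hG hne hb
  exact ⟨d, hd, side_nest hG hd.2.1 h.1 ((side_compl hG h.1).1 (hd.1 a b h)) hbd⟩

lemma kern_fst (hG : G.IsTree) {x y : V} (h : (x, y) ∈ kern G) : x ∈ core G := by
  by_contra hx
  obtain ⟨h1, h2, h3⟩ := h
  obtain ⟨a, b, hr, hxa⟩ := not_mem_core.1 hx
  have hya : y ∈ side G a b := by
    by_contra hya
    obtain ⟨rfl, rfl⟩ := side_exit hG hr.1 hxa h1 hya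
    exact h3 hr
  rcases side_total hG x y a with ha | ha
  · exact h3 (hr.sub h1.symm (side_nest hG hr.1 h1.symm ha hxa))
  · exact h2 (hr.sub h1 (side_nest hG hr.1 h1 ha hya))

lemma kern_snd (hG : G.IsTree) {x y : V} (h : (x, y) ∈ kern G) : y ∈ core G :=
  kern_fst hG (x := y) (y := x) ⟨h.1.symm, h.2.2, h.2.1⟩

/-- A non-backtracking walk whose vertices all have exactly two neighbours is a chain. -/
lemma chain_of_eDeg {f : ℕ → V} (h : NB G f) (h2 : ∀ n, (G.neighborSet (f n)).encard = 2) :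
    Chain G f := by
  intro n
  refine ⟨(h n).2, fun z => ?_⟩
  obtain ⟨a, b, hab, he⟩ := Set.encard_eq_two.1 (h2 (n + 1))
  have hz : ∀ z, G.Adj (f (n + 1)) z ↔ z = a ∨ z = b := fun z => by
    rw [← mem_neighborSet, he]; simp
  have h3 := (hz _).1 (h n).1.symm
  have h4 := (hz _).1 (h (n + 1)).1
  have h5 := (h n).2
  rw [hz]
  grind

/-- An infinite set of vertices in a locally finite tree yields a ray all of whose tails
separate infinitely many of its elements from the start. -/
lemma exists_nb (hG : G.IsTree) (hlf : ∀ v, (G.neighborSet v).Finite) {X : Set V}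
    (hX : X.Infinite) :
    ∃ f : ℕ → V, NB G f ∧ ∀ n, (side G (f n) (f (n + 1)) ∩ X).Infinite := by
  have step : ∀ (c : V) (Y : Set V), Y.Infinite →
      ∃ n, G.Adj c n ∧ (side G c n ∩ Y).Infinite := by
    intro c Y hY
    by_contra hno
    push Not at hno
    refine hY (((Set.Finite.biUnion (hlf c) (t := fun n => side G c n ∩ Y)
      fun n hn => hno n hn).insert c).subset fun z hz => ?_)
    by_cases hzc : z = c
    · exact Or.inl hzc
    · obtain ⟨n, hn, hzn⟩ := exists_side hG hzc
      exact Or.inr (Set.mem_biUnion hn ⟨hzn, hz⟩)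
  let D := {d : V × V // G.Adj d.1 d.2 ∧ (side G d.1 d.2 ∩ X).Infinite}
  have next : ∀ d : D, ∃ d' : D, d'.1.1 = d.1.2 ∧ d'.1.2 ≠ d.1.1 := by
    rintro ⟨⟨p, c⟩, h1, h2⟩
    obtain ⟨n, hn, hi⟩ := step c _ h2
    refine ⟨⟨(c, n), hn, hi.mono fun z hz => ⟨hz.1, hz.2.2⟩⟩, rfl, ?_⟩
    intro (hnp : n = p)
    subst hnp
    obtain ⟨z, hz⟩ := hi.nonempty
    exact side_disj hG h1 hz.2.1 hz.1
  choose nx hn1 hn2 using next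
  obtain ⟨c₀⟩ := hG.1.nonempty
  obtain ⟨n₀, h1, h2⟩ := step c₀ X hX
  let g : ℕ → D := fun n => nx^[n] ⟨(c₀, n₀), h1, h2⟩
  have hg : ∀ n, g (n + 1) = nx (g n) := fun n => Function.iterate_succ_apply' _ _ _
  have hg1 : ∀ n, (g (n + 1)).1.1 = (g n).1.2 := fun n => by rw [hg, hn1]
  refine ⟨fun n => (g n).1.1, fun n => ⟨?_, ?_⟩, fun n => ?_⟩
  · simp only [hg1]
    exact (g n).2.1
  · simp only [hg1]
    rw [hg]
    exact hn2 _
  · simp only [hg1]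
    exact (g n).2.2

lemma core_finite (hG : G.IsTree) (hlf : ∀ v, (G.neighborSet v).Finite) (hs : IsSmall G) :
    (core G).Finite := by
  by_contra hX
  obtain ⟨f, hf, hi⟩ := exists_nb hG hlf hX
  obtain ⟨M, hM⟩ := hs f ⟨hf.injective hG, fun n => (hf n).1⟩
  have hc : Chain G fun n => f (M + n) :=
    chain_of_eDeg (fun n => hf (M + n)) fun n => hM _ (by omega)
  have hr : RD G (f M) (f (M + 1)) := hc.rd hG 0
  obtain ⟨z, hz, hzc⟩ := (hi M).nonempty
  exact hzc _ _ hr hz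

lemma kern_finite (hG : G.IsTree) (hlf : ∀ v, (G.neighborSet v).Finite) (hs : IsSmall G) :
    (kern G).Finite :=
  ((core_finite hG hlf hs).prod (core_finite hG hlf hs)).subset
    fun _ hd => ⟨kern_fst hG hd, kern_snd hG hd⟩

lemma roots_finite (hG : G.IsTree) (hlf : ∀ v, (G.neighborSet v).Finite) (hs : IsSmall G) :
    (roots G).Finite := by
  refine (Set.Finite.biUnion (core_finite hG hlf hs)
    (t := fun v => (fun w => (v, w)) '' G.neighborSet v)
    fun v _ => (hlf v).image _).subset ?_
  rintro ⟨x, y⟩ hd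
  exact Set.mem_biUnion hd.1 ⟨y, hd.2.1, rfl⟩

end Core

/-! ### Contractions from minor models -/

section Contraction
variable {V W : Type*} {T : SimpleGraph V} {S : SimpleGraph W}

/-- `φ` presents the tree `T` as a contraction of the tree `S`. Connectedness of the fibres
is expressed through sides: an edge separating two vertices of a fibre lies in that fibre.
Every edge of `T` has a lift to `S`, and the two sides of a lift are the preimages of the sides
below. -/
structure Contr (T : SimpleGraph V) (S : SimpleGraph W) (φ : W → V) : Prop where
  surj : Function.Surjective φ
  lift : ∀ v w, T.Adj v w → ∃ a b, S.Adj a b ∧ φ a = v ∧ φ b = w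
  adj : ∀ x y, S.Adj x y → φ x ≠ φ y → T.Adj (φ x) (φ y)
  sep : ∀ x y, S.Adj x y → φ x ≠ φ y → ∀ s, s ∈ side S x y ↔ φ s ∈ side T (φ x) (φ y)
  conn : ∀ x y s s', S.Adj x y → s ∈ side S x y → s' ∈ side S y x → φ s = φ s' →
    φ x = φ s ∧ φ y = φ s

/-- The lifted edges of a minor model. -/
def cross (T : SimpleGraph V) (μ : V → Set W) : Set (Sym2 W) :=
  {e | ∃ v w a b, T.Adj v w ∧ a ∈ μ v ∧ b ∈ μ w ∧ e = s(a, b)}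

lemma _root_.IsModel.eq_of_mem {μ : V → Set W} (h : IsModel T S μ) {v w : V} {a : W} (hv : a ∈ μ v)
    (hw : a ∈ μ w) : v = w := by
  by_contra hne
  exact Set.disjoint_left.1 (h.disjoint v w hne) hv hw

/-- Branch sets stay on their side of an edge with ends in different branch sets. -/
lemma _root_.IsModel.branch_side {μ : V → Set W} (h : IsModel T S μ) {v w u : V} {a b c d : W}
    (hvw : v ≠ w) (ha : a ∈ μ v) (hb : b ∈ μ w) (hc : c ∈ μ u) (hd : d ∈ μ u)
    (hcs : c ∈ side S a b) : d ∈ side S a b := by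
  have hr := (h.connected u).preconnected ⟨c, hc⟩ ⟨d, hd⟩
  refine reach_induct (X := {z : μ u | z.1 ∈ side S a b}) hr hcs ?_
  rintro ⟨p, hp⟩ ⟨q, hq⟩ - hps hpq
  refine side_step hps hpq fun he => hvw ?_
  rw [Sym2.eq_iff] at he
  rcases he with ⟨rfl, rfl⟩ | ⟨rfl, rfl⟩
  · rw [h.eq_of_mem ha hp, h.eq_of_mem hb hq]
  · rw [h.eq_of_mem ha hq, h.eq_of_mem hb hp]

/-- A lifted edge separates the branch sets in the same way as the edge below. -/
lemma _root_.IsModel.side_of {μ : V → Set W} (h : IsModel T S μ) {v w u : V} {a b c : W}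
    (hvw : T.Adj v w) (ha : a ∈ μ v) (hb : b ∈ μ w) (hu : u ∈ side T v w)
    (hc : c ∈ μ u) : c ∈ side S a b := by
  refine side_induct (X := {u | ∀ c ∈ μ u, c ∈ side S a b})
    (fun c hc => h.branch_side hvw.ne ha hb hb hc (side_self _ _)) ?_ hu c hc
  intro p q _ hp hpq hne c hc
  obtain ⟨c', hc', d', hd', hcd⟩ := h.edge p q hpq
  refine h.branch_side hvw.ne ha hb hd' hc (side_step (hp c' hc') hcd fun he => hne ?_)
  rw [Sym2.eq_iff] at he
  rcases he with ⟨rfl, rfl⟩ | ⟨rfl, rfl⟩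
  · rw [h.eq_of_mem ha hc', h.eq_of_mem hb hd']
  · rw [h.eq_of_mem ha hd', h.eq_of_mem hb hc', Sym2.eq_swap]

/-- Walks that avoid the lifted edges do not change sides of a lifted edge. -/
lemma reach_side {μ : V → Set W} {x y p q : W} (he : s(x, y) ∈ cross T μ)
    (hr : (S.deleteEdges (cross T μ)).Reachable p q) (hp : p ∈ side S x y) : q ∈ side S x y := by
  refine reach_induct hr hp fun p q _ hp hpq => ?_
  rw [deleteEdges_adj] at hpq
  exact side_step hp hpq.1 fun h => hpq.2 (h ▸ he)

/-- A minor of a tree which is itself a tree is a contraction: the fibres are the components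
of what remains after deleting the lifted edges. -/
lemma exists_contr (hT : T.IsTree) (hS : S.IsTree) (h : IsMinorOf T S) :
    ∃ φ : W → V, Contr T S φ := by
  obtain ⟨μ, h⟩ := h
  set H := S.deleteEdges (cross T μ) with hH
  have hadj : ∀ {p q}, S.Adj p q → s(p, q) ∉ cross T μ → H.Reachable p q := fun h1 h2 =>
    Adj.reachable (by rw [hH, deleteEdges_adj]; exact ⟨h1, h2⟩)
  -- every component meets some branch set
  have hex : ∀ s, ∃ v, ∃ a ∈ μ v, H.Reachable a s := by
    intro s
    obtain ⟨v₀⟩ := hT.1.nonempty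
    obtain ⟨a₀, ha₀⟩ := h.nonempty v₀
    refine reach_induct (X := {s | ∃ v, ∃ a ∈ μ v, H.Reachable a s})
      (hS.1.preconnected a₀ s) ⟨v₀, a₀, ha₀, Reachable.refl _⟩ ?_
    rintro p q - ⟨v, a, ha, hap⟩ hpq
    by_cases he : s(p, q) ∈ cross T μ
    · obtain ⟨v, w, a, b, -, ha, hb, he⟩ := he
      rw [Sym2.eq_iff] at he
      rcases he with ⟨-, rfl⟩ | ⟨-, rfl⟩
      · exact ⟨w, q, hb, Reachable.refl _⟩
      · exact ⟨v, q, ha, Reachable.refl _⟩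
    · exact ⟨v, a, ha, hap.trans (hadj hpq he)⟩
  -- and no two of them
  have huniq : ∀ v w a b, a ∈ μ v → b ∈ μ w → H.Reachable a b → v = w := by
    intro v w a b ha hb hr
    by_contra hne
    obtain ⟨u, hvu, hw⟩ := exists_side hT (Ne.symm hne)
    obtain ⟨c, hc, d, hd, hcd⟩ := h.edge v u hvu
    have hbs := h.side_of hvu hc hd hw hb
    have has := h.side_of hvu.symm hd hc (side_self _ _) ha
    have hcr : s(d, c) ∈ cross T μ := ⟨u, v, d, c, hvu.symm, hd, hc, rfl⟩
    exact side_disj hS hcd hbs (reach_side hcr hr has)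
  choose φ hφ using hex
  have hφ_eq : ∀ v a s, a ∈ μ v → H.Reachable a s → φ s = v := by
    intro v a s ha hr
    obtain ⟨b, hb, hr'⟩ := hφ s
    exact huniq _ _ b a hb ha (hr'.trans hr.symm)
  have hφ_reach : ∀ s t, H.Reachable s t → φ s = φ t := by
    intro s t hr
    obtain ⟨a, ha, hr'⟩ := hφ s
    exact (hφ_eq _ a t ha (hr'.trans hr)).symm
  have hφμ : ∀ v a, a ∈ μ v → φ a = v := fun v a ha => hφ_eq v a a ha (Reachable.refl _)
  have hcross : ∀ x y, S.Adj x y → φ x ≠ φ y →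
      T.Adj (φ x) (φ y) ∧ x ∈ μ (φ x) ∧ y ∈ μ (φ y) := by
    intro x y hxy hne
    by_cases he : s(x, y) ∈ cross T μ
    · obtain ⟨v, w, a, b, hvw, ha, hb, he⟩ := he
      rw [Sym2.eq_iff] at he
      rcases he with ⟨rfl, rfl⟩ | ⟨rfl, rfl⟩
      · rw [hφμ v x ha, hφμ w y hb]; exact ⟨hvw, ha, hb⟩
      · rw [hφμ v y ha, hφμ w x hb]; exact ⟨hvw.symm, hb, ha⟩
    · exact absurd (hφ_reach _ _ (hadj hxy he)) hne
  have hsep : ∀ x y, S.Adj x y → φ x ≠ φ y → ∀ s, φ s ∈ side T (φ x) (φ y) → s ∈ side S x y := by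
    intro x y hxy hne s hs
    obtain ⟨h1, h2, h3⟩ := hcross x y hxy hne
    obtain ⟨a, ha, hr⟩ := hφ s
    exact reach_side ⟨_, _, x, y, h1, h2, h3, rfl⟩ hr (h.side_of h1 h2 h3 hs ha)
  refine ⟨φ, ⟨fun v => ?_, fun v w hvw => ?_, fun x y hxy hne => (hcross x y hxy hne).1,
    fun x y hxy hne s => ⟨fun hs => ?_, hsep x y hxy hne s⟩, fun x y s s' hxy hs hs' he => ?_⟩⟩
  · obtain ⟨a, ha⟩ := h.nonempty v
    exact ⟨a, hφμ v a ha⟩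
  · obtain ⟨a, ha, b, hb, hab⟩ := h.edge v w hvw
    exact ⟨a, b, hab, hφμ v a ha, hφμ w b hb⟩
  · by_contra hns
    exact side_disj hS hxy hs (hsep y x hxy.symm hne.symm s
      ((side_compl hT (hcross x y hxy hne).1).1 hns))
  · have hr : H.Reachable s s' := by
      obtain ⟨a, ha, hr⟩ := hφ s
      obtain ⟨b, hb, hr'⟩ := hφ s'
      rw [← he] at hb
      have hab : H.Reachable a b := by
        refine reach_induct (X := {z : μ (φ s) | H.Reachable a z.1})
          ((h.connected (φ s)).preconnected ⟨a, ha⟩ ⟨b, hb⟩) (Reachable.refl _) ?_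
        rintro ⟨p, hp⟩ ⟨q, hq⟩ - hap hpq
        refine hap.trans (hadj hpq ?_)
        rintro ⟨v, w, c, d, hvw, hc, hd, he⟩
        rw [Sym2.eq_iff] at he
        rcases he with ⟨rfl, rfl⟩ | ⟨rfl, rfl⟩
        · exact hvw.ne ((h.eq_of_mem hc hp).trans (h.eq_of_mem hq hd))
        · exact hvw.ne ((h.eq_of_mem hc hq).trans (h.eq_of_mem hp hd))
      exact hr.symm.trans (hab.trans hr')
    -- the walk from `s` to `s'` has to use the edge `xy`
    have hy : H.Reachable s y ∧ H.Reachable y x := by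
      by_contra hno
      refine side_disj hS hxy (reach_induct (X := side S x y) hr hs fun p q hp hps hpq => ?_) hs'
      by_contra hq
      obtain ⟨rfl, rfl⟩ := side_exit hS hxy hps
        ((deleteEdges_adj.1 hpq).1) hq
      exact hno ⟨hp, hpq.reachable⟩
    exact ⟨(hφ_reach _ _ (hy.1.trans hy.2)).symm, (hφ_reach _ _ hy.1).symm⟩

end Contraction

/-! ### Contractions in both directions -/

section Mutual
variable {V W : Type*} {T : SimpleGraph V} {S : SimpleGraph W} {φ : W → V} {ψ : V → W}

/-- The standing assumptions: a locally finite small tree. -/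
structure LFSTree {V : Type*} (G : SimpleGraph V) : Prop where
  tree : G.IsTree
  lf : ∀ v, (G.neighborSet v).Finite
  small : IsSmall G

lemma nbr_side (hT : T.IsTree) {v u w : V} (hu : T.Adj v u) (hw : T.Adj v w)
    (h : w ∈ side T v u) : w = u :=
  (side_exit hT hu h hw.symm (not_mem_side hT hu)).1

lemma Contr.subset_iff (hφ : Contr T S φ) {a b a' b' : W} (h : S.Adj a b) (h' : S.Adj a' b')
    (hne : φ a ≠ φ b) (hne' : φ a' ≠ φ b') :
    side S a b ⊆ side S a' b' ↔ side T (φ a) (φ b) ⊆ side T (φ a') (φ b') := by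
  constructor
  · intro hs z hz
    obtain ⟨s, rfl⟩ := hφ.surj z
    exact (hφ.sep _ _ h' hne' s).1 (hs ((hφ.sep _ _ h hne s).2 hz))
  · intro hs z hz
    exact (hφ.sep _ _ h' hne' z).2 (hs ((hφ.sep _ _ h hne z).1 hz))

/-- The fibre over a branching vertex contains a branching vertex: the median of the three
places where the lifted edges leave the fibre. -/
lemma Contr.br_lift (hT : T.IsTree) (hS : S.IsTree) (hφ : Contr T S φ) {v : V} (hv : Br T v) :
    ∃ s, φ s = v ∧ Br S s := by
  obtain ⟨w₁, w₂, w₃, h1, h2, h3, h12, h13, h23⟩ := hv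
  obtain ⟨a₁, b₁, hab₁, ha₁, hb₁⟩ := hφ.lift _ _ h1
  obtain ⟨a₂, b₂, hab₂, ha₂, hb₂⟩ := hφ.lift _ _ h2
  obtain ⟨a₃, b₃, hab₃, ha₃, hb₃⟩ := hφ.lift _ _ h3
  have hne : φ a₁ ≠ φ b₁ := by rw [ha₁, hb₁]; exact h1.ne
  -- walk through the fibre towards `b₂` and `b₃` until the two directions diverge
  have key : ∀ n p q, S.dist q b₂ = n → S.Adj p q → φ q = v → b₂ ∈ side S p q →
      b₃ ∈ side S p q → ∃ s, φ s = v ∧ Br S s := by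
    intro n
    induction n using Nat.strong_induction_on with
    | _ n ih =>
      intro p q hn hpq hq hs₂ hs₃
      have hq₂ : b₂ ≠ q := by
        rintro rfl
        exact h2.ne (hq.symm.trans hb₂)
      have hq₃ : b₃ ≠ q := by
        rintro rfl
        exact h3.ne (hq.symm.trans hb₃)
      obtain ⟨t, ht, hbt⟩ := exists_side hS hq₂
      obtain ⟨t', ht', hbt'⟩ := exists_side hS hq₃
      have htp : p ≠ t := by
        rintro rfl
        exact side_disj hS hpq hs₂ hbt
      have htp' : p ≠ t' := by
        rintro rfl
        exact side_disj hS hpq hs₃ hbt'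
      by_cases htt : t = t'
      · subst htt
        refine ih _ (hn ▸ dist_lt hS ht hbt) q t rfl ht ?_ hbt hbt'
        by_contra htv
        have hqt : φ q ≠ φ t := by rw [hq]; exact Ne.symm htv
        have hadj := hφ.adj _ _ ht hqt
        rw [hφ.sep _ _ ht hqt, hb₂, hq] at hbt
        rw [hφ.sep _ _ ht hqt, hb₃, hq] at hbt'
        rw [hq] at hadj
        exact h23 ((nbr_side hT hadj h2 hbt).trans (nbr_side hT hadj h3 hbt').symm)
      · exact ⟨q, hq, p, t, t', hpq.symm, ht, ht', htp, htp', htt⟩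
  refine key _ b₁ a₁ rfl hab₁.symm ha₁ ?_ ?_
  · rw [← side_compl hS hab₁, hφ.sep _ _ hab₁ hne, ha₁, hb₁, hb₂]
    exact fun h => h12 (nbr_side hT h1 h2 h).symm
  · rw [← side_compl hS hab₁, hφ.sep _ _ hab₁ hne, ha₁, hb₁, hb₃]
    exact fun h => h13 (nbr_side hT h1 h3 h).symm

lemma Contr.br_side (hT : T.IsTree) (hS : S.IsTree) (hφ : Contr T S φ) {a b : W}
    (h : S.Adj a b) (hne : φ a ≠ φ b) (hb : ∃ z ∈ side T (φ a) (φ b), Br T z) :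
    ∃ z ∈ side S a b, Br S z := by
  obtain ⟨z, hz, hbr⟩ := hb
  obtain ⟨s, rfl, hs⟩ := hφ.br_lift hT hS hbr
  exact ⟨s, (hφ.sep _ _ h hne s).2 hz, hs⟩

/-- A function choosing lifts of oriented edges. -/
lemma Contr.exists_lft (hS : S.IsTree) (hφ : Contr T S φ) :
    ∃ L : V × V → W × W, ∀ d, T.Adj d.1 d.2 →
      S.Adj (L d).1 (L d).2 ∧ φ (L d).1 = d.1 ∧ φ (L d).2 = d.2 := by
  have : ∀ d : V × V, ∃ e : W × W, T.Adj d.1 d.2 →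
      S.Adj e.1 e.2 ∧ φ e.1 = d.1 ∧ φ e.2 = d.2 := by
    intro d
    by_cases hd : T.Adj d.1 d.2
    · obtain ⟨a, b, h1, h2, h3⟩ := hφ.lift _ _ hd
      exact ⟨(a, b), fun _ => ⟨h1, h2, h3⟩⟩
    · obtain ⟨w⟩ := hS.1.nonempty
      exact ⟨(w, w), fun h => absurd h hd⟩
  choose L hL using this
  exact ⟨L, hL⟩

lemma lft_inj {L : V × V → W × W} (hL : ∀ d, T.Adj d.1 d.2 →
      S.Adj (L d).1 (L d).2 ∧ φ (L d).1 = d.1 ∧ φ (L d).2 = d.2) {d d' : V × V}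
    (hd : T.Adj d.1 d.2) (hd' : T.Adj d'.1 d'.2) (h : L d = L d') : d = d' := by
  obtain ⟨-, h1, h2⟩ := hL d hd
  obtain ⟨-, h1', h2'⟩ := hL d' hd'
  rw [h] at h1 h2
  exact Prod.ext (h1.symm.trans h1') (h2.symm.trans h2')

lemma surjOn_of_finite {α β : Type*} {A : Set α} {B : Set β} {f : α → β} {g : β → α}
    (hA : A.Finite) (hB : B.Finite) (hf : Set.MapsTo f A B) (hfi : Set.InjOn f A)
    (hg : Set.MapsTo g B A) (hgi : Set.InjOn g B) : Set.SurjOn f A B := by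
  have h1 : B.ncard ≤ A.ncard := Set.ncard_le_ncard_of_injOn g hg hgi hA
  have : f '' A = B := Set.eq_of_subset_of_ncard_le hf.image_subset
    (by rwa [hfi.ncard_image]) hB
  exact this.ge

/-- The oriented edges with branching vertices on both sides. -/
def brEdges (G : SimpleGraph V) : Set (V × V) :=
  {d | G.Adj d.1 d.2 ∧ (∃ z ∈ side G d.1 d.2, Br G z) ∧ ∃ z ∈ side G d.2 d.1, Br G z}

lemma LFSTree.brEdges_finite {G : SimpleGraph V} (hG : LFSTree G) : (brEdges G).Finite := by
  refine (kern_finite hG.tree hG.lf hG.small).subset ?_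
  rintro d ⟨h, ⟨z, hz, hbz⟩, z', hz', hbz'⟩
  exact ⟨h, fun hr => (hr.2 z hz).not_br hbz, fun hr => (hr.2 z' hz').not_br hbz'⟩

lemma Contr.brEdges_mapsTo (hT : T.IsTree) (hS : S.IsTree) (hφ : Contr T S φ)
    {L : V × V → W × W} (hL : ∀ d, T.Adj d.1 d.2 →
      S.Adj (L d).1 (L d).2 ∧ φ (L d).1 = d.1 ∧ φ (L d).2 = d.2) :
    Set.MapsTo L (brEdges T) (brEdges S) := by
  rintro d ⟨hd, h1, h2⟩
  obtain ⟨h3, h4, h5⟩ := hL d hd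
  have hne : φ (L d).1 ≠ φ (L d).2 := by rw [h4, h5]; exact hd.ne
  refine ⟨h3, hφ.br_side hT hS h3 hne ?_, hφ.br_side hT hS h3.symm hne.symm ?_⟩
  · rwa [h4, h5]
  · rwa [h4, h5]

/-- Lifting reflects having branching vertices on both sides, because it is an injection
between finite sets of equal size. -/
lemma brEdges_reflect (hT : LFSTree T) (hS : LFSTree S) (hφ : Contr T S φ) (hψ : Contr S T ψ)
    {a b : W} (_h : S.Adj a b) (_hne : φ a ≠ φ b) (hb : (a, b) ∈ brEdges S) :
    (φ a, φ b) ∈ brEdges T := by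
  obtain ⟨L, hL⟩ := hφ.exists_lft hS.tree
  obtain ⟨M, hM⟩ := hψ.exists_lft hT.tree
  obtain ⟨d, hd, hdL⟩ := surjOn_of_finite hT.brEdges_finite hS.brEdges_finite
    (hφ.brEdges_mapsTo hT.tree hS.tree hL) (fun d hd d' hd' => lft_inj hL hd.1 hd'.1)
    (hψ.brEdges_mapsTo hS.tree hT.tree hM) (fun d hd d' hd' => lft_inj hM hd.1 hd'.1) hb
  obtain ⟨-, h1, h2⟩ := hL d hd.1
  rw [hdL] at h1 h2
  rwa [show (φ a, φ b) = d from Prod.ext h1 h2]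

/-- Lifts of bare ray tails are bare ray tails. -/
lemma rd_lift (hT : LFSTree T) (hS : LFSTree S) (hφ : Contr T S φ) (hψ : Contr S T ψ)
    {a b : W} (h : S.Adj a b) (hr : RD T (φ a) (φ b)) : RD S a b := by
  have hne := hr.1.ne
  refine rd_of_infinite hS.tree h (fun hf => hr.infinite hT.tree ?_) fun z hz hbz => ?_
  · refine (hf.image φ).subset fun v hv => ?_
    obtain ⟨s, rfl⟩ := hφ.surj v
    exact ⟨s, (hφ.sep _ _ h hne s).2 hv, rfl⟩
  · obtain ⟨y, -, hy⟩ := hψ.br_lift hS.tree hT.tree hbz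
    have hy' : y ∈ side T (φ b) (φ a) :=
      (side_compl hT.tree hr.1).1 fun hys => (hr.2 y hys).not_br hy
    have h2 := hφ.br_side hT.tree hS.tree h.symm hne.symm ⟨y, hy', hy⟩
    obtain ⟨-, ⟨u, hu, hbu⟩, -⟩ := brEdges_reflect hT hS hφ hψ h hne ⟨h, ⟨z, hz, hbz⟩, h2⟩
    exact (hr.2 u hu).not_br hbu

lemma core_map (hT : LFSTree T) (hS : LFSTree S) (hφ : Contr T S φ) (hψ : Contr S T ψ)
    {s : W} (hs : s ∈ core S) : φ s ∈ core T := by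
  intro v w hr hsv
  obtain ⟨a, b, hab, rfl, rfl⟩ := hφ.lift v w hr.1
  exact hs a b (rd_lift hT hS hφ hψ hab hr) ((hφ.sep _ _ hab hr.1.ne s).2 hsv)

/-- The relation between a maximal bare ray tail `d` below and the maximal bare ray tail `e`
above containing its lift. -/
def RootRel (S : SimpleGraph W) (φ : W → V) (d : V × V) (e : W × W) : Prop :=
  ∃ a b, S.Adj a b ∧ φ a = d.1 ∧ φ b = d.2 ∧ side S a b ⊆ side S e.1 e.2

lemma exists_rootMap (hT : LFSTree T) (hS : LFSTree S) (hφ : Contr T S φ) (hψ : Contr S T ψ)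
    (hne : (core S).Nonempty) :
    ∃ h : V × V → W × W, Set.MapsTo h (roots T) (roots S) ∧ Set.InjOn h (roots T) ∧
      ∀ d ∈ roots T, RootRel S φ d (h d) := by
  have : ∀ d : V × V, ∃ e : W × W, d ∈ roots T → e ∈ roots S ∧ RootRel S φ d e := by
    intro d
    by_cases hd : d ∈ roots T
    · obtain ⟨a, b, hab, h1, h2⟩ := hφ.lift _ _ hd.2.1
      obtain ⟨e, he, hs⟩ := root_sub hS.tree hne
        (rd_lift hT hS hφ hψ hab (by rw [h1, h2]; exact hd.2))
      exact ⟨e, fun _ => ⟨he, a, b, hab, h1, h2, hs⟩⟩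
    · obtain ⟨w⟩ := hS.tree.1.nonempty
      exact ⟨(w, w), fun h => absurd h hd⟩
  choose h hh using this
  refine ⟨h, fun d hd => (hh d hd).1, fun d hd d' hd' he => ?_, fun d hd => (hh d hd).2⟩
  obtain ⟨hr, a, b, hab, h1, h2, hs⟩ := hh d hd
  obtain ⟨-, a', b', hab', h1', h2', hs'⟩ := hh d' hd'
  rw [← he] at hs'
  have n1 : φ a ≠ φ b := by rw [h1, h2]; exact hd.2.1.ne
  have n2 : φ a' ≠ φ b' := by rw [h1', h2']; exact hd'.2.1.ne
  rcases hr.2.nested hS.tree hab hab' hs hs' with hn | hn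
  · rw [hφ.subset_iff hab hab' n1 n2, h1, h2, h1', h2'] at hn
    exact root_unique hT.tree hd hd' (side_self _ _) (hn (side_self _ _))
  · rw [hφ.subset_iff hab' hab n2 n1, h1, h2, h1', h2'] at hn
    exact root_unique hT.tree hd hd' (hn (side_self _ _)) (side_self _ _)

lemma exists_rootBij (hT : LFSTree T) (hS : LFSTree S) (hφ : Contr T S φ) (hψ : Contr S T ψ)
    (hneT : (core T).Nonempty) (hne : (core S).Nonempty) :
    ∃ h : V × V → W × W, Set.BijOn h (roots T) (roots S) ∧
      ∀ d ∈ roots T, RootRel S φ d (h d) := by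
  obtain ⟨h, h1, h2, h3⟩ := exists_rootMap hT hS hφ hψ hne
  obtain ⟨k, k1, k2, -⟩ := exists_rootMap hS hT hψ hφ hneT
  exact ⟨h, ⟨h1, h2, surjOn_of_finite (roots_finite hT.tree hT.lf hT.small)
    (roots_finite hS.tree hS.lf hS.small) h1 h2 k1 k2⟩, h3⟩

/-- Conversely to `rd_lift`, only bare ray tails lift to bare ray tails: the lift lies on a
maximal tail which already contains the lift of some maximal tail below. -/
lemma rd_down (hT : LFSTree T) (hS : LFSTree S) (hφ : Contr T S φ) (hψ : Contr S T ψ)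
    (hneT : (core T).Nonempty) (hne : (core S).Nonempty) {a b : W} (hab : φ a ≠ φ b)
    (hr : RD S a b) : RD T (φ a) (φ b) := by
  obtain ⟨h, hbij, hrel⟩ := exists_rootBij hT hS hφ hψ hneT hne
  obtain ⟨e, he, hs⟩ := root_sub hS.tree hne hr
  obtain ⟨d, hd, rfl⟩ := hbij.surjOn he
  obtain ⟨a', b', hab', h1, h2, hs'⟩ := hrel d hd
  have n2 : φ a' ≠ φ b' := by rw [h1, h2]; exact hd.2.1.ne
  have hadj := hφ.adj _ _ hr.1 hab
  rcases he.2.nested hS.tree hr.1 hab' hs hs' with hn | hn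
  · rw [hφ.subset_iff hr.1 hab' hab n2, h1, h2] at hn
    exact hd.2.sub hadj hn
  · rw [hφ.subset_iff hab' hr.1 n2 hab, h1, h2] at hn
    refine rd_of_infinite hT.tree hadj ((hd.2.infinite hT.tree).mono hn) fun z hz hbz => ?_
    obtain ⟨u, hu, hbu⟩ := hφ.br_side hT.tree hS.tree hr.1 hab ⟨z, hz, hbz⟩
    exact (hr.2 u hu).not_br hbu

lemma kern_mapsTo (hT : LFSTree T) (hS : LFSTree S) (hφ : Contr T S φ) (hψ : Contr S T ψ)
    (hneT : (core T).Nonempty) (hne : (core S).Nonempty)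
    {L : V × V → W × W} (hL : ∀ d, T.Adj d.1 d.2 →
      S.Adj (L d).1 (L d).2 ∧ φ (L d).1 = d.1 ∧ φ (L d).2 = d.2) :
    Set.MapsTo L (kern T) (kern S) := by
  rintro d ⟨hd, h1, h2⟩
  obtain ⟨h3, h4, h5⟩ := hL d hd
  have hn : φ (L d).1 ≠ φ (L d).2 := by rw [h4, h5]; exact hd.ne
  refine ⟨h3, fun hr => h1 ?_, fun hr => h2 ?_⟩
  · have := rd_down hT hS hφ hψ hneT hne hn hr
    rwa [h4, h5] at this
  · have := rd_down hT hS hφ hψ hneT hne hn.symm hr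
    rwa [h4, h5] at this

/-- No edge of the core is contracted. -/
lemma kern_ne (hT : LFSTree T) (hS : LFSTree S) (hφ : Contr T S φ) (hψ : Contr S T ψ)
    (hneT : (core T).Nonempty) (hne : (core S).Nonempty) {e : W × W} (he : e ∈ kern S) :
    φ e.1 ≠ φ e.2 := by
  obtain ⟨L, hL⟩ := hφ.exists_lft hS.tree
  obtain ⟨M, hM⟩ := hψ.exists_lft hT.tree
  obtain ⟨d, hd, rfl⟩ := surjOn_of_finite (kern_finite hT.tree hT.lf hT.small)
    (kern_finite hS.tree hS.lf hS.small)
    (kern_mapsTo hT hS hφ hψ hneT hne hL) (fun d hd d' hd' => lft_inj hL hd.1 hd'.1)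
    (kern_mapsTo hS hT hψ hφ hne hneT hM) (fun d hd d' hd' => lft_inj hM hd.1 hd'.1) he
  obtain ⟨-, h1, h2⟩ := hL d hd.1
  rw [h1, h2]
  exact hd.1.ne

lemma core_injOn (hT : LFSTree T) (hS : LFSTree S) (hφ : Contr T S φ) (hψ : Contr S T ψ)
    (hneT : (core T).Nonempty) (hne : (core S).Nonempty) : Set.InjOn φ (core S) := by
  intro s hs s' hs' he
  by_contra hss
  obtain ⟨t, hst, ht⟩ := exists_side hS.tree (Ne.symm hss)
  obtain ⟨h1, h2⟩ := hφ.conn s t s' s hst ht (side_self _ _) he.symm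
  exact kern_ne hT hS hφ hψ hneT hne (e := (s, t))
    ⟨hst, fun hr => hs' _ _ hr ht, fun hr => hs _ _ hr (side_self _ _)⟩ (h1.trans h2.symm)

lemma core_bijOn (hT : LFSTree T) (hS : LFSTree S) (hφ : Contr T S φ) (hψ : Contr S T ψ)
    (hneT : (core T).Nonempty) (hne : (core S).Nonempty) :
    Set.BijOn φ (core S) (core T) :=
  ⟨fun _ hs => core_map hT hS hφ hψ hs, core_injOn hT hS hφ hψ hneT hne,
    surjOn_of_finite (core_finite hS.tree hS.lf hS.small) (core_finite hT.tree hT.lf hT.small)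
      (fun _ hs => core_map hT hS hφ hψ hs) (core_injOn hT hS hφ hψ hneT hne)
      (fun _ hs => core_map hS hT hψ hφ hs) (core_injOn hS hT hψ hφ hne hneT)⟩

lemma core_adj_iff (hT : LFSTree T) (hS : LFSTree S) (hφ : Contr T S φ) (hψ : Contr S T ψ)
    (hneT : (core T).Nonempty) (hne : (core S).Nonempty) {s s' : W} (hs : s ∈ core S)
    (hs' : s' ∈ core S) : T.Adj (φ s) (φ s') ↔ S.Adj s s' := by
  have hinj := core_injOn hT hS hφ hψ hneT hne
  constructor
  · intro h
    obtain ⟨L, hL⟩ := hφ.exists_lft hS.tree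
    have hk : (φ s, φ s') ∈ kern T :=
      ⟨h, fun hr => core_map hT hS hφ hψ hs' _ _ hr (side_self _ _),
        fun hr => core_map hT hS hφ hψ hs _ _ hr (side_self _ _)⟩
    have hkL := kern_mapsTo hT hS hφ hψ hneT hne hL hk
    obtain ⟨h1, h2, h3⟩ := hL (φ s, φ s') h
    rwa [hinj (kern_fst hS.tree hkL) hs h2, hinj (kern_snd hS.tree hkL) hs' h3] at h1
  · intro h
    exact hφ.adj _ _ h fun he => h.ne (hinj hs hs' he)

/-- Corresponding maximal bare ray tails are attached at corresponding vertices. -/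
lemma rootRel_fst (hT : LFSTree T) (hS : LFSTree S) (hφ : Contr T S φ) (hψ : Contr S T ψ)
    (hneT : (core T).Nonempty) (hne : (core S).Nonempty) {d : V × V} {e : W × W}
    (hd : d ∈ roots T) (he : e ∈ roots S) (h : RootRel S φ d e) : φ e.1 = d.1 := by
  obtain ⟨a, b, hab, h1, h2, hs⟩ := h
  obtain ⟨s, hsc, hsd⟩ := (core_bijOn hT hS hφ hψ hneT hne).surjOn hd.1
  by_cases ha : a ∈ side S e.1 e.2
  · have hs' : s ∈ side S e.2 e.1 := (side_compl hS.tree he.2.1).1 (hsc _ _ he.2)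
    rw [(hφ.conn _ _ a s he.2.1 ha hs' (h1.trans hsd.symm)).1, h1]
  · obtain ⟨-, rfl⟩ := side_exit hS.tree he.2.1 (hs (side_self _ _)) hab.symm ha
    exact h1

end Mutual

/-! ### Extending an isomorphism along bare rays -/

section Gluing
variable {V W : Type*} {T : SimpleGraph V} {S : SimpleGraph W}

/-- A decomposition of a tree into a vertex set `C` and bare ray tails, starting with the
oriented edges in `R`, that are attached to `C`. -/
structure Decomp (G : SimpleGraph V) (C : Set V) (R : Set (V × V)) : Prop where
  fst : ∀ d ∈ R, d.1 ∈ C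
  rd : ∀ d ∈ R, RD G d.1 d.2
  out : ∀ d ∈ R, ∀ z ∈ side G d.1 d.2, z ∉ C
  uniq : ∀ d ∈ R, ∀ d' ∈ R, ∀ z ∈ side G d.1 d.2, z ∈ side G d'.1 d'.2 → d = d'
  cover : ∀ t, t ∉ C → ∃ d ∈ R, t ∈ side G d.1 d.2

lemma glue_hom (hT : T.IsTree) (hS : S.IsTree) {C : Set V} {R : Set (V × V)} {C' : Set W}
    {R' : Set (W × W)} (hD : Decomp T C R) (hD' : Decomp S C' R') {g : V → W}
    {h : V × V → W × W} (hg : ∀ x ∈ C, ∀ y ∈ C, T.Adj x y → S.Adj (g x) (g y))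
    (hh : Set.MapsTo h R R') (hgh : ∀ d ∈ R, (h d).1 = g d.1) :
    ∃ Θ : V → W, (∀ x ∈ C, Θ x = g x) ∧
      (∀ d ∈ R, ∀ n, Θ (rayF T d.1 d.2 n) = rayF S (h d).1 (h d).2 n) ∧
      ∀ t t', T.Adj t t' → S.Adj (Θ t) (Θ t') := by
  have hex : ∀ t, ∃ w, (t ∈ C → w = g t) ∧
      ∀ d ∈ R, ∀ n, t = rayF T d.1 d.2 n → w = rayF S (h d).1 (h d).2 n := by
    intro t
    by_cases ht : t ∈ C
    · refine ⟨g t, fun _ => rfl, fun d hd n hn => ?_⟩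
      cases n with
      | zero =>
        rw [rayF_zero] at hn ⊢
        rw [hn, hgh d hd]
      | succ n => exact absurd ht (hD.out d hd t (((hD.rd d hd).mem_side_iff hT t).2 ⟨n, hn⟩))
    · obtain ⟨d, hd, htd⟩ := hD.cover t ht
      obtain ⟨m, hm⟩ := ((hD.rd d hd).mem_side_iff hT t).1 htd
      refine ⟨rayF S (h d).1 (h d).2 (m + 1), fun h => absurd h ht, fun d' hd' n hn => ?_⟩
      cases n with
      | zero => exact absurd (hn ▸ hD.fst d' hd') ht
      | succ n =>
        obtain rfl := hD.uniq d hd d' hd' t htd (((hD.rd d' hd').mem_side_iff hT t).2 ⟨n, hn⟩)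
        rw [((hD.rd d hd).chain hT).nb.injective hT (hm.symm.trans hn)]
  choose Θ hΘ1 hΘ2 using hex
  have hray : ∀ d ∈ R, ∀ n, Θ (rayF T d.1 d.2 n) = rayF S (h d).1 (h d).2 n :=
    fun d hd n => hΘ2 _ d hd n rfl
  have hout : ∀ t t', T.Adj t t' → t ∉ C → S.Adj (Θ t) (Θ t') := by
    intro t t' htt ht
    obtain ⟨d, hd, htd⟩ := hD.cover t ht
    obtain ⟨m, rfl⟩ := ((hD.rd d hd).mem_side_iff hT t).1 htd
    have hc := ((hD'.rd _ (hh hd)).chain hS).nb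
    rcases (((hD.rd d hd).chain hT m).2 t').1 htt with rfl | rfl
    · rw [hray d hd, hray d hd]
      exact (hc m).1.symm
    · rw [hray d hd, hray d hd]
      exact (hc (m + 1)).1
  refine ⟨Θ, fun x hx => hΘ1 x hx, hray, fun t t' htt => ?_⟩
  by_cases ht : t ∈ C
  · by_cases ht' : t' ∈ C
    · rw [hΘ1 t ht, hΘ1 t' ht']
      exact hg t ht t' ht' htt
    · exact (hout t' t htt.symm ht').symm
  · exact hout t t' htt ht

lemma glue_left_inv (hT : T.IsTree) {C : Set V} {R : Set (V × V)} {C' : Set W}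
    {R' : Set (W × W)} (hD : Decomp T C R) {g : V → W} {g' : W → V} {h : V × V → W × W}
    {h' : W × W → V × V} (hgm : Set.MapsTo g C C') (hhm : Set.MapsTo h R R')
    (hg : Set.LeftInvOn g' g C) (hh : Set.LeftInvOn h' h R)
    {Θ : V → W} {Θ' : W → V} (h1 : ∀ x ∈ C, Θ x = g x)
    (h2 : ∀ d ∈ R, ∀ n, Θ (rayF T d.1 d.2 n) = rayF S (h d).1 (h d).2 n)
    (h1' : ∀ x ∈ C', Θ' x = g' x)
    (h2' : ∀ d ∈ R', ∀ n, Θ' (rayF S d.1 d.2 n) = rayF T (h' d).1 (h' d).2 n) (t : V) :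
    Θ' (Θ t) = t := by
  by_cases ht : t ∈ C
  · rw [h1 t ht, h1' _ (hgm ht), hg ht]
  · obtain ⟨d, hd, htd⟩ := hD.cover t ht
    obtain ⟨m, rfl⟩ := ((hD.rd d hd).mem_side_iff hT t).1 htd
    rw [h2 d hd, h2' _ (hhm hd), hh hd]

/-- An isomorphism between the sets `C`, `C'` of two decompositions, with a matching of the rays
that respects the points of attachment, extends to an isomorphism of the trees. -/
lemma glue (hT : T.IsTree) (hS : S.IsTree) {C : Set V} {R : Set (V × V)} {C' : Set W}
    {R' : Set (W × W)} (hD : Decomp T C R) (hD' : Decomp S C' R') {g : V → W}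
    {h : V × V → W × W} (hgb : Set.BijOn g C C')
    (hg : ∀ x ∈ C, ∀ y ∈ C, T.Adj x y ↔ S.Adj (g x) (g y))
    (hh : Set.BijOn h R R') (hgh : ∀ d ∈ R, (h d).1 = g d.1) : Nonempty (T ≃g S) := by
  obtain ⟨v₀⟩ := hT.1.nonempty
  have : Nonempty V := ⟨v₀⟩
  have hgi := hgb.invOn_invFunOn
  have hhi := hh.invOn_invFunOn
  have hgb' := hgb.symm hgi.symm
  have hh' := hh.symm hhi.symm
  obtain ⟨Θ, a1, a2, a3⟩ := glue_hom hT hS hD hD'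
    (fun x hx y hy => (hg x hx y hy).1) hh.mapsTo hgh
  obtain ⟨Θ', b1, b2, b3⟩ := glue_hom hS hT hD' hD (g := Function.invFunOn g C)
    (h := Function.invFunOn h R)
    (fun x hx y hy hxy => (hg _ (hgb'.mapsTo hx) _ (hgb'.mapsTo hy)).2
      (by rwa [hgi.2 hx, hgi.2 hy]))
    hh'.mapsTo (fun e he => by
      have h1 := hgh _ (hh'.mapsTo he)
      rw [hhi.2 he] at h1
      rw [h1, hgi.1 (hD.fst _ (hh'.mapsTo he))])
  have l1 : ∀ t, Θ' (Θ t) = t :=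
    glue_left_inv hT hD hgb.mapsTo hh.mapsTo hgi.1 hhi.1 a1 a2 b1 b2
  have l2 : ∀ t, Θ (Θ' t) = t :=
    glue_left_inv hS hD' hgb'.mapsTo hh'.mapsTo hgi.2 hhi.2 b1 b2 a1 a2
  refine ⟨⟨⟨Θ, Θ', l1, l2⟩, fun {a b} => ⟨fun hab => ?_, a3 a b⟩⟩⟩
  have := b3 _ _ hab
  simpa [l1] using this

lemma core_decomp (hT : T.IsTree) (hne : (core T).Nonempty) : Decomp T (core T) (roots T) where
  fst _ hd := hd.1
  rd _ hd := hd.2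
  out _ hd _ hz hzc := hzc _ _ hd.2 hz
  uniq _ hd _ hd' _ hz hz' := root_unique hT hd hd' hz hz'
  cover _ ht := exists_root hT hne ht

/-- In a double ray, every vertex has a bare ray attached on either side. -/
lemma line_decomp (hT : T.IsTree) (h : ∀ z, Deg2 T z) (y : V) :
    ∃ a b, a ≠ b ∧ Decomp T {y} {(y, a), (y, b)} := by
  obtain ⟨a, b, hab, hy⟩ := h y
  have ha : T.Adj y a := (hy a).2 (Or.inl rfl)
  have hb : T.Adj y b := (hy b).2 (Or.inr rfl)
  have hdis : ∀ z, z ∈ side T y a → z ∉ side T y b := fun z hz =>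
    side_apart hT hb (fun h => hab (nbr_side hT ha hb h).symm)
      (fun h => hab (nbr_side hT hb ha h)) hz
  refine ⟨a, b, hab, ⟨?_, ?_, ?_, ?_, ?_⟩⟩
  · rintro d (rfl | rfl) <;> rfl
  · rintro d (rfl | rfl)
    · exact ⟨ha, fun z _ => h z⟩
    · exact ⟨hb, fun z _ => h z⟩
  · rintro d (rfl | rfl) z hz rfl
    · exact not_mem_side hT ha hz
    · exact not_mem_side hT hb hz
  · rintro d (rfl | rfl) d' (rfl | rfl) z hz hz'
    · rfl
    · exact absurd hz' (hdis z hz)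
    · exact absurd hz (hdis z hz')
    · rfl
  · intro t ht
    obtain ⟨n, hn, htn⟩ := exists_side hT ht
    rcases (hy n).1 hn with rfl | rfl
    · exact ⟨_, Or.inl rfl, htn⟩
    · exact ⟨_, Or.inr rfl, htn⟩

/-- Any two double rays are isomorphic. -/
lemma line_iso (hT : T.IsTree) (hS : S.IsTree) (h : ∀ z, Deg2 T z) (h' : ∀ z, Deg2 S z) :
    Nonempty (T ≃g S) := by
  classical
  obtain ⟨y⟩ := hT.1.nonempty
  obtain ⟨y'⟩ := hS.1.nonempty
  obtain ⟨a, b, hab, hD⟩ := line_decomp hT h y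
  obtain ⟨a', b', hab', hD'⟩ := line_decomp hS h' y'
  refine glue hT hS hD hD' (g := fun _ => y')
    (h := fun d => if d = (y, a) then (y', a') else (y', b')) ?_ ?_ ?_ ?_
  · refine ⟨fun _ _ => rfl, fun x hx z hz _ => ?_, fun z hz => ⟨y, rfl, ?_⟩⟩
    · exact (Set.mem_singleton_iff.1 hx).trans (Set.mem_singleton_iff.1 hz).symm
    · exact (Set.mem_singleton_iff.1 hz).symm
  · rintro x rfl z rfl
    simp
  · have hne : (y, b) ≠ (y, a) := fun h => hab (Prod.ext_iff.1 h).2.symm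
    refine ⟨?_, ?_, ?_⟩
    · rintro d (rfl | rfl)
      · simp
      · simp [hne]
    · rintro d (rfl | rfl) d' (rfl | rfl) he
      · rfl
      · simp [hne, hab'] at he
      · simp [hne, hab'.symm] at he
      · rfl
    · rintro e (rfl | rfl)
      · exact ⟨(y, a), Or.inl rfl, by simp⟩
      · exact ⟨(y, b), Or.inr rfl, by simp [hab.symm]⟩
  · intro d _
    split_ifs <;> rfl

lemma iso_of_contr {φ : W → V} {ψ : V → W} (hT : LFSTree T) (hS : LFSTree S)
    (hφ : Contr T S φ) (hψ : Contr S T ψ) : Nonempty (T ≃g S) := by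
  by_cases hneT : (core T).Nonempty
  · have hne : (core S).Nonempty := hneT.elim fun _ hv => ⟨_, core_map hS hT hψ hφ hv⟩
    obtain ⟨h, hbij, hrel⟩ := exists_rootBij hT hS hφ hψ hneT hne
    have hb := core_bijOn hT hS hφ hψ hneT hne
    obtain ⟨w₀⟩ := hS.tree.1.nonempty
    have : Nonempty W := ⟨w₀⟩
    have hi := hb.invOn_invFunOn
    have hb' := hb.symm hi.symm
    refine glue hT.tree hS.tree (core_decomp hT.tree hneT) (core_decomp hS.tree hne)
      hb' (fun x hx y hy => ?_) hbij fun d hd => ?_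
    · rw [← core_adj_iff hT hS hφ hψ hneT hne (hb'.mapsTo hx) (hb'.mapsTo hy), hi.2 hx, hi.2 hy]
    · rw [← rootRel_fst hT hS hφ hψ hneT hne hd (hbij.mapsTo hd) (hrel d hd),
        hi.1 (hbij.mapsTo hd).1]
  · have hd2 : ∀ z, Deg2 T z := fun z => by
      obtain ⟨x, y, hr, hz⟩ := not_mem_core.1 fun hz => hneT ⟨z, hz⟩
      exact hr.2 z hz
    have hd2' : ∀ z, Deg2 S z := fun z => by
      obtain ⟨x, y, hr, hz⟩ := not_mem_core.1 fun hz => hneT ⟨_, core_map hT hS hφ hψ hz⟩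
      exact hr.2 z hz
    exact line_iso hT.tree hS.tree hd2 hd2'

lemma isMinorOf_of_iso (e : T ≃g S) : IsMinorOf T S := by
  refine ⟨fun v => {e v}, ⟨fun v => Set.singleton_nonempty _, fun v => ?_, fun v w hvw => ?_,
    fun v w hvw => ⟨_, rfl, _, rfl, e.map_adj_iff.2 hvw⟩⟩⟩
  · exact Connected.of_subsingleton
  · simpa using hvw

end Gluing

end SmallTree

/-- Two locally finite small trees are isomorphic iff they are minors of
each other. -/
theorem stmt4 {V W : Type*} (T : SimpleGraph V) (S : SimpleGraph W)
    (hT : T.IsTree) (hS : S.IsTree)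
    (hlfT : ∀ v, (T.neighborSet v).Finite) (hlfS : ∀ w, (S.neighborSet w).Finite)
    (hsT : IsSmall T) (hsS : IsSmall S) :
    Nonempty (T ≃g S) ↔ (IsMinorOf T S ∧ IsMinorOf S T) := by
  constructor
  · rintro ⟨e⟩
    exact ⟨SmallTree.isMinorOf_of_iso e, SmallTree.isMinorOf_of_iso e.symm⟩
  · rintro ⟨h1, h2⟩
    obtain ⟨φ, hφ⟩ := SmallTree.exists_contr hT hS h1
    obtain ⟨ψ, hψ⟩ := SmallTree.exists_contr hS hT h2
    exact SmallTree.iso_of_contr ⟨hT, hlfT, hsT⟩ ⟨hS, hlfS, hsS⟩ hφ hψ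
end

section
/- For any rooted tree (T, r) and any vertex v of T, the number of isomorphism classes of rooted trees mutually rooted-minor-equivalent to (T_v, v) is at most the number of isomorphism classes of rooted trees mutually rooted-minor-equivalent to (T, r). -/
/-!
For trees, being a rooted minor is an order-theoretic notion: `(S, s)` is a rooted minor of `(T, r)`
iff there is an embedding of tree orders `f : S → T`, that is `x ≤ y ↔ f x ≤ f y`
(`isRootedMinorOf_iff`). From a model one reads off the minima of the branch sets. From an embedding
`f` one obtains a model by letting the branch set of `x` consist of `f x` together with all vertices
`z` such that `f x ≤ z < f y` for some child `y` of `x`; these sets are disjoint because `y` covers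
`x`.

Mutual equivalence is therefore an equivalence relation on rooted trees, and `numClasses` depends
only on the equivalence class of its argument (`numClasses_congr`). By induction on the depth of `v`
it suffices to treat a child `v` of the root of a tree `X` (`numClasses_child_le`). Given a tree `S`
equivalent to `T_v`, replace by a copy of `S` *every* child subtree `T_u` of the root that is
equivalent to `T_v`. The result is a tree equivalent to `X`. It determines `S` up to isomorphism: a
root-preserving isomorphism permutes the child subtrees, and those equivalent to `T_v` are exactly
the copies of `S`. Replacing only `T_v` itself need not be injective when the root has infinitely
many children. The replacement is formed with `graft`, which joins a new root to the roots of a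
family of rooted graphs.
-/

open SimpleGraph

/-- `a` is the minimal vertex of `A` with respect to the tree order rooted at `s`. -/
def BranchMin {W : Type*} (S : SimpleGraph W) (s : W) (A : Set W) (a : W) : Prop :=
  a ∈ A ∧ ∀ x ∈ A, treeLE S s a x

/-- A rooted minor model: a minor model that is compatible with the tree orders,
comparing the minimal vertices of branch sets. -/
structure IsRootedModel {V W : Type*} (T : SimpleGraph V) (r : V)
    (S : SimpleGraph W) (s : W) (μ : V → Set W) : Prop where
  toIsModel : IsModel T S μ
  ord : ∀ v w a b, BranchMin S s (μ v) a → BranchMin S s (μ w) b →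
    (treeLE T r v w ↔ treeLE S s a b)

/-- `(T, r)` is a rooted minor of `(S, s)`. -/
def IsRootedMinorOf {V W : Type*} (T : SimpleGraph V) (r : V)
    (S : SimpleGraph W) (s : W) : Prop :=
  ∃ μ : V → Set W, IsRootedModel T r S s μ

/-- A rooted graph: a graph with a distinguished root vertex. -/
structure RootedGraph : Type 1 where
  V : Type
  G : SimpleGraph V
  root : V

/-- Mutual rooted-minor equivalence of rooted graphs. -/
def RootedMutualMinor (X Y : RootedGraph) : Prop :=
  IsRootedMinorOf X.G X.root Y.G Y.root ∧ IsRootedMinorOf Y.G Y.root X.G X.root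

/-- Rooted isomorphism. -/
def RootedIso (X Y : RootedGraph) : Prop :=
  ∃ φ : X.G ≃g Y.G, φ X.root = Y.root

/-- The full rooted subtree of `X` at a vertex `v`. -/
def subtreeAt (X : RootedGraph) (v : X.V) : RootedGraph where
  V := {w : X.V // treeLE X.G X.root v w}
  G := X.G.induce {w : X.V | treeLE X.G X.root v w}
  root := ⟨v, Or.inl rfl⟩

/-- The number of isomorphism classes of rooted trees mutually
rooted-minor-equivalent to `Z`. -/
noncomputable def numClasses (Z : RootedGraph) : Cardinal :=
  Cardinal.mk (Quot (fun a b : {Y : RootedGraph // Y.G.IsTree ∧ RootedMutualMinor Y Z} =>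
    RootedIso a.1 b.1))

/-! ### The tree order -/

section TreeOrder

variable {V : Type*} {G : SimpleGraph V} {r : V}

theorem treeLE_iff_mem (hG : G.IsTree) {v w : V} (p : G.Walk r w) (hp : p.IsPath) :
    treeLE G r v w ↔ v ∈ p.support := by
  constructor
  · rintro (rfl | ⟨q, hq, hv⟩)
    · exact p.end_mem_support
    · have := (hG.existsUnique_path r w).unique hp hq
      rwa [this]
  · exact fun h => Or.inr ⟨p, hp, h⟩

/-- The tree order in metric terms: `v ≤ w` iff `v` lies on a geodesic from `r` to `w`. -/
theorem treeLE_iff_dist (hG : G.IsTree) {v w : V} :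
    treeLE G r v w ↔ G.dist r v + G.dist v w = G.dist r w := by
  classical
  obtain ⟨p, hp, hl⟩ := hG.connected.exists_path_of_dist r w
  constructor
  · intro h
    rw [treeLE_iff_mem hG p hp] at h
    have h1 := congrArg Walk.length (p.take_spec h)
    rw [Walk.length_append] at h1
    have h2 := SimpleGraph.dist_le (p.takeUntil v h)
    have h3 := SimpleGraph.dist_le (p.dropUntil v h)
    have h4 := hG.connected.dist_triangle (u := r) (v := v) (w := w)
    omega
  · intro h
    obtain ⟨a, -, ha⟩ := hG.connected.exists_path_of_dist r v
    obtain ⟨b, -, hb⟩ := hG.connected.exists_path_of_dist v w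
    refine Or.inr ⟨a.append b, Walk.isPath_of_length_eq_dist _ ?_, ?_⟩
    · rw [Walk.length_append]; omega
    · simp

theorem treeLE_refl (x : V) : treeLE G r x x := Or.inl rfl

theorem treeLE_root (hG : G.IsTree) (x : V) : treeLE G r r x := by
  rw [treeLE_iff_dist hG]; simp

theorem treeLE_trans (hG : G.IsTree) {x y z : V} (h1 : treeLE G r x y) (h2 : treeLE G r y z) :
    treeLE G r x z := by
  rw [treeLE_iff_dist hG] at *
  have := hG.connected.dist_triangle (u := x) (v := y) (w := z)
  have := hG.connected.dist_triangle (u := r) (v := x) (w := z)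
  omega

theorem treeLE_eq_of_dist_le (hG : G.IsTree) {x y : V} (h1 : treeLE G r x y)
    (h : G.dist r y ≤ G.dist r x) : x = y := by
  rw [treeLE_iff_dist hG] at h1
  exact hG.connected.dist_eq_zero_iff.1 (by omega)

theorem treeLE_antisymm (hG : G.IsTree) {x y : V} (h1 : treeLE G r x y) (h2 : treeLE G r y x) :
    x = y := by
  refine treeLE_eq_of_dist_le hG h1 ?_
  rw [treeLE_iff_dist hG] at h2
  omega

/-- A vertex strictly above `x` has a parent, and the parent is still above `x`. -/
theorem exists_parent (hG : G.IsTree) {x y : V} (h : treeLE G r x y) (hne : x ≠ y) :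
    ∃ p, G.Adj p y ∧ treeLE G r x p ∧ treeLE G r p y ∧ G.dist r y = G.dist r p + 1 := by
  obtain ⟨w, -, hl⟩ := hG.connected.exists_path_of_dist y x
  cases w with
  | nil => exact absurd rfl hne
  | @cons _ p _ hadj q =>
    rw [Walk.length_cons] at hl
    have h1 := SimpleGraph.dist_le q
    have h2 := hadj.symm.diff_dist_adj (u := r)
    have h4 : G.dist p y = 1 := SimpleGraph.dist_eq_one_iff_adj.2 hadj.symm
    have h5 := hG.connected.dist_triangle (u := r) (v := x) (w := p)
    have h6 := hG.connected.dist_triangle (u := r) (v := p) (w := y)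
    have h7 := G.dist_comm (u := y) (v := x)
    have h8 := G.dist_comm (u := p) (v := x)
    refine ⟨p, hadj.symm, ?_⟩
    simp only [treeLE_iff_dist hG] at *
    omega

theorem adj_le_or_le (hG : G.IsTree) {x y : V} (h : G.Adj x y) :
    treeLE G r x y ∨ treeLE G r y x := by
  have h1 : G.dist x y = 1 := SimpleGraph.dist_eq_one_iff_adj.2 h
  have h2 := G.dist_comm (u := y) (v := x)
  have h3 := hG.dist_eq_dist_add_one_of_adj r h
  simp only [treeLE_iff_dist hG]
  omega

theorem parent_unique (hG : G.IsTree) {p q y : V} (hp : G.Adj p y) (hq : G.Adj q y)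
    (hpy : G.dist r p < G.dist r y) (hqy : G.dist r q < G.dist r y) : p = q := by
  have key : ∀ {p : V}, G.Adj p y → G.dist r p < G.dist r y →
      ∃ w : G.Walk r y, w.IsPath ∧ w.penultimate = p := by
    intro p hp hpy
    obtain ⟨w, -, hl⟩ := hG.connected.exists_path_of_dist r p
    refine ⟨w.concat hp, Walk.isPath_of_length_eq_dist _ ?_, by simp⟩
    have := hG.dist_eq_dist_add_one_of_adj r hp
    rw [Walk.length_concat]; omega
  obtain ⟨a, ha, rfl⟩ := key hp hpy
  obtain ⟨b, hb, rfl⟩ := key hq hqy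
  rw [(hG.existsUnique_path r y).unique ha hb]

/-- The vertices below a given one form a chain. -/
theorem treeLE_chain (hG : G.IsTree) {x y z : V} (hx : treeLE G r x z) (hy : treeLE G r y z) :
    treeLE G r x y ∨ treeLE G r y x := by
  induction hn : G.dist r z generalizing z with
  | zero =>
    have := treeLE_eq_of_dist_le hG hx (by omega)
    subst this
    exact Or.inr hy
  | succ n ih =>
    by_cases hxz : x = z
    · subst hxz; exact Or.inr hy
    by_cases hyz : y = z
    · subst hyz; exact Or.inl hx
    obtain ⟨p, hp, hxp, -, hdp⟩ := exists_parent hG hx hxz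
    obtain ⟨q, hq, hyq, -, hdq⟩ := exists_parent hG hy hyz
    obtain rfl := parent_unique (r := r) hG hp hq (by omega) (by omega)
    exact ih hxp hyq (by omega)

/-- Adjacent vertices form a covering pair of the tree order. -/
theorem adj_cover (hG : G.IsTree) {x y z : V} (h : G.Adj x y) (hxz : treeLE G r x z)
    (hzy : treeLE G r z y) : z = x ∨ z = y := by
  have h1 := h.symm.diff_dist_adj (u := r)
  rw [treeLE_iff_dist hG] at hxz hzy
  by_cases h0 : G.dist x z = 0
  · exact Or.inl (hG.connected.dist_eq_zero_iff.1 h0).symm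
  · exact Or.inr (hG.connected.dist_eq_zero_iff.1 (by omega))

theorem BranchMin.unique (hG : G.IsTree) {A : Set V} {a b : V} (ha : BranchMin G r A a)
    (hb : BranchMin G r A b) : a = b :=
  treeLE_antisymm hG (ha.2 _ hb.1) (hb.2 _ ha.1)

theorem exists_branchMin (hG : G.IsTree) {A : Set V} (hA : (G.induce A).Connected) :
    ∃ a, BranchMin G r A a := by
  obtain ⟨a, ha⟩ := exists_minimal_of_wellFoundedLT (fun n => ∃ a : A, G.dist r a = n)
    ⟨_, hA.nonempty.some, rfl⟩
  obtain ⟨⟨a, rfl⟩, hmin⟩ := ha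
  have hmin' : ∀ b : A, G.dist r a ≤ G.dist r b := fun b =>
    (le_total (G.dist r a) (G.dist r b)).elim id (fun h => hmin ⟨b, rfl⟩ h)
  refine ⟨a, a.2, fun x hx => ?_⟩
  obtain ⟨w⟩ := hA.preconnected ⟨x, hx⟩ a
  suffices H : ∀ (x y : A) (w : (G.induce A).Walk x y), y = a → treeLE G r a x from
    H _ _ w rfl
  intro x y w
  induction w with
  | nil => rintro rfl; exact treeLE_refl _
  | @cons x y z h q ih =>
    intro hz
    have hay := ih hz
    have hadj : G.Adj x y := h
    rcases adj_le_or_le (r := r) hG hadj with hxy | hyx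
    · rcases treeLE_chain hG hay hxy with h1 | h1
      · exact h1
      · rw [treeLE_eq_of_dist_le hG h1 (hmin' x)]; exact treeLE_refl _
    · exact treeLE_trans hG hay hyx

/-- A connected graph is a tree if it carries a height function that differs on adjacent vertices
and such that every vertex has at most one lower neighbour. -/
theorem isTree_of_height (hc : G.Connected) (d : V → ℕ) (hne : ∀ x y, G.Adj x y → d x ≠ d y)
    (hu : ∀ p q y, G.Adj p y → G.Adj q y → d p < d y → d q < d y → p = q) : G.IsTree := by
  classical
  refine ⟨hc, fun v c hcyc => ?_⟩
  -- the two neighbours on the cycle of a highest vertex are both lower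
  obtain ⟨m, hm, hmax⟩ := c.support.toFinset.exists_max_image d ⟨v, by simp⟩
  rw [List.mem_toFinset] at hm
  have hr := hcyc.rotate hm
  have hle : ∀ x ∈ (c.rotate m hm).support, d x ≤ d m := fun x hx =>
    hmax x (by rwa [List.mem_toFinset, ← Walk.mem_support_rotate_iff c m hm])
  have h1 := Walk.adj_snd hr.not_nil
  have h2 := Walk.adj_penultimate hr.not_nil
  refine hr.snd_ne_penultimate (hu _ _ m h1.symm h2 ?_ ?_)
  · exact lt_of_le_of_ne (hle _ (Walk.getVert_mem_support _ _)) (hne _ _ h1.symm)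
  · exact lt_of_le_of_ne (hle _ (Walk.getVert_mem_support _ _)) (hne _ _ h2)

end TreeOrder

/-! ### Rooted minors as embeddings of tree orders -/

/-- `X` embeds into `Y` as a tree order. The map need not send the root to the root, and covering
pairs need not go to covering pairs. -/
def OrdEmb (X Y : RootedGraph) : Prop :=
  ∃ f : X.V → Y.V, ∀ x y, treeLE X.G X.root x y ↔ treeLE Y.G Y.root (f x) (f y)

theorem OrdEmb.refl (X : RootedGraph) : OrdEmb X X := ⟨id, fun _ _ => Iff.rfl⟩

theorem OrdEmb.trans {X Y Z : RootedGraph} : OrdEmb X Y → OrdEmb Y Z → OrdEmb X Z := by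
  rintro ⟨f, hf⟩ ⟨g, hg⟩
  exact ⟨g ∘ f, fun x y => (hf x y).trans (hg _ _)⟩

theorem ordEmb_of_surjective {X Y : RootedGraph} (f : X.V → Y.V) (hs : Function.Surjective f)
    (hf : ∀ x y, treeLE X.G X.root x y ↔ treeLE Y.G Y.root (f x) (f y)) :
    OrdEmb X Y ∧ OrdEmb Y X := by
  refine ⟨⟨f, hf⟩, Function.surjInv hs, fun x y => ?_⟩
  rw [hf, Function.surjInv_eq hs, Function.surjInv_eq hs]

/-- The branch set of `x` in the model attached to an embedding `f` of tree orders: `f x` together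
with everything from `f x` up to, but excluding, the images of the children of `x`. -/
def ordBranch (X Y : RootedGraph) (f : X.V → Y.V) (x : X.V) : Set Y.V :=
  {z | treeLE Y.G Y.root (f x) z ∧ (z = f x ∨ ∃ y, X.G.Adj x y ∧ treeLE X.G X.root x y ∧
    treeLE Y.G Y.root z (f y) ∧ z ≠ f y)}

theorem branchMin_ordBranch (X Y : RootedGraph) (f : X.V → Y.V) (x : X.V) :
    BranchMin Y.G Y.root (ordBranch X Y f x) (f x) :=
  ⟨⟨treeLE_refl _, Or.inl rfl⟩, fun _ hz => hz.1⟩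

theorem ordBranch_connected {X Y : RootedGraph} (hY : Y.G.IsTree) (f : X.V → Y.V) (x : X.V) :
    (Y.G.induce (ordBranch X Y f x)).Connected := by
  have h0 := (branchMin_ordBranch X Y f x).1
  have key : ∀ n z (hz : z ∈ ordBranch X Y f x), Y.G.dist Y.root z = n →
      (Y.G.induce (ordBranch X Y f x)).Reachable ⟨z, hz⟩ ⟨f x, h0⟩ := by
    intro n
    induction n with
    | zero =>
      intro z hz hn
      have := treeLE_eq_of_dist_le hY hz.1 (by omega)
      subst this
      exact Reachable.refl _
    | succ n ih =>
      intro z hz hn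
      by_cases hzx : f x = z
      · subst hzx; exact Reachable.refl _
      obtain ⟨p, hp, hxp, hpz, hd⟩ := exists_parent hY hz.1 hzx
      have hpm : p ∈ ordBranch X Y f x := by
        refine ⟨hxp, Or.inr ?_⟩
        obtain ⟨-, h | ⟨y, hxy, hle, hzy, hne⟩⟩ := hz
        · exact absurd h.symm hzx
        · refine ⟨y, hxy, hle, treeLE_trans hY hpz hzy, ?_⟩
          rintro rfl
          exact hne (treeLE_antisymm hY hzy hpz)
      have hadj : (Y.G.induce (ordBranch X Y f x)).Adj ⟨z, hz⟩ ⟨p, hpm⟩ := hp.symm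
      exact hadj.reachable.trans (ih p hpm (by omega))
  have : Nonempty (ordBranch X Y f x) := ⟨⟨f x, h0⟩⟩
  exact ⟨fun a b => (key _ a.1 a.2 rfl).trans (key _ b.1 b.2 rfl).symm⟩

theorem isRootedMinorOf_iff {X Y : RootedGraph} (hX : X.G.IsTree) (hY : Y.G.IsTree) :
    IsRootedMinorOf X.G X.root Y.G Y.root ↔ OrdEmb X Y := by
  constructor
  · rintro ⟨μ, hμ⟩
    choose f hf using fun x => exists_branchMin (r := Y.root) hY (hμ.toIsModel.connected x)
    exact ⟨f, fun x y => hμ.ord x y _ _ (hf x) (hf y)⟩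
  · rintro ⟨f, hf⟩
    have hinj : ∀ x y, f x = f y → x = y := fun x y h =>
      treeLE_antisymm hX ((hf x y).2 (h ▸ treeLE_refl _)) ((hf y x).2 (h ▸ treeLE_refl _))
    -- if `f x' ≤ z < f y` with `y` a child of `x < x'`, then `x'` lies strictly between `x` and `y`
    have aux : ∀ x x' z, x ≠ x' → treeLE Y.G Y.root (f x) (f x') → z ∈ ordBranch X Y f x →
        z ∈ ordBranch X Y f x' → False := by
      rintro x x' z hne hle ⟨hxz, h⟩ ⟨hx'z, -⟩
      rcases h with rfl | ⟨y, hadj, hxy, hzy, hzne⟩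
      · exact hne (hinj _ _ (treeLE_antisymm hY hle hx'z))
      · rcases adj_cover hX hadj ((hf _ _).2 hle) ((hf _ _).2 (treeLE_trans hY hx'z hzy)) with
          h | h
        · exact hne h.symm
        · subst h; exact hzne (treeLE_antisymm hY hzy hx'z)
    have hedge : ∀ x y, X.G.Adj x y → treeLE X.G X.root x y →
        ∃ a ∈ ordBranch X Y f x, ∃ b ∈ ordBranch X Y f y, Y.G.Adj a b := by
      intro x y hadj hle
      obtain ⟨p, hp, hxp, hpy, hd⟩ := exists_parent hY ((hf x y).1 hle)
        (fun h => hadj.ne (hinj _ _ h))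
      exact ⟨p, ⟨hxp, Or.inr ⟨y, hadj, hle, hpy, hp.ne⟩⟩, f y, (branchMin_ordBranch X Y f y).1, hp⟩
    refine ⟨ordBranch X Y f, ⟨fun x => ⟨_, (branchMin_ordBranch X Y f x).1⟩,
      ordBranch_connected hY f, ?_, ?_⟩, ?_⟩
    · intro x x' hne
      rw [Set.disjoint_left]
      intro z hz hz'
      rcases treeLE_chain hY hz.1 hz'.1 with h | h
      · exact aux x x' z hne h hz hz'
      · exact aux x' x z hne.symm h hz' hz
    · intro x y hadj
      rcases adj_le_or_le (r := X.root) hX hadj with h | h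
      · exact hedge x y hadj h
      · obtain ⟨a, ha, b, hb, hab⟩ := hedge y x hadj.symm h
        exact ⟨b, hb, a, ha, hab.symm⟩
    · intro x y a b ha hb
      rw [ha.unique hY (branchMin_ordBranch X Y f x), hb.unique hY (branchMin_ordBranch X Y f y)]
      exact hf x y

/-- Mutual embeddability of tree orders. -/
def OrdEquiv (X Y : RootedGraph) : Prop := OrdEmb X Y ∧ OrdEmb Y X

theorem OrdEquiv.refl (X : RootedGraph) : OrdEquiv X X := ⟨.refl X, .refl X⟩

theorem OrdEquiv.symm {X Y : RootedGraph} (h : OrdEquiv X Y) : OrdEquiv Y X := ⟨h.2, h.1⟩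

theorem OrdEquiv.trans {X Y Z : RootedGraph} (h : OrdEquiv X Y) (h' : OrdEquiv Y Z) :
    OrdEquiv X Z := ⟨h.1.trans h'.1, h'.2.trans h.2⟩

theorem rootedMutualMinor_iff {X Y : RootedGraph} (hX : X.G.IsTree) (hY : Y.G.IsTree) :
    RootedMutualMinor X Y ↔ OrdEquiv X Y :=
  and_congr (isRootedMinorOf_iff hX hY) (isRootedMinorOf_iff hY hX)

/-! ### Rooted isomorphism -/

theorem RootedIso.refl (X : RootedGraph) : RootedIso X X := ⟨Iso.refl, rfl⟩

theorem RootedIso.symm {X Y : RootedGraph} : RootedIso X Y → RootedIso Y X := by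
  rintro ⟨φ, h⟩
  exact ⟨φ.symm, by rw [← h]; exact φ.symm_apply_apply _⟩

theorem RootedIso.trans {X Y Z : RootedGraph} : RootedIso X Y → RootedIso Y Z → RootedIso X Z := by
  rintro ⟨φ, h⟩ ⟨ψ, h'⟩
  exact ⟨φ.trans ψ, by rw [← h', ← h]; rfl⟩

theorem RootedIso.ordEquiv {X Y : RootedGraph} (hX : X.G.IsTree) (hY : Y.G.IsTree) :
    RootedIso X Y → OrdEquiv X Y := by
  rintro ⟨φ, h⟩
  refine ordEmb_of_surjective φ φ.surjective fun x y => ?_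
  obtain ⟨p, hp, -⟩ := hX.connected.exists_path_of_dist X.root y
  have hq : ((p.map φ.toHom).copy h rfl).IsPath := by
    simpa using hp.map φ.injective
  rw [treeLE_iff_mem hX p hp]
  refine Iff.trans ?_ (treeLE_iff_mem hY _ hq).symm
  simp

theorem rootedIso_equivalence (P : RootedGraph → Prop) :
    Equivalence (fun a b : {Y : RootedGraph // P Y} => RootedIso a.1 b.1) :=
  ⟨fun a => .refl a.1, fun h => h.symm, fun h h' => h.trans h'⟩

theorem numClasses_congr {Z Z' : RootedGraph} (hZ : Z.G.IsTree) (hZ' : Z'.G.IsTree)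
    (h : OrdEquiv Z Z') : numClasses Z = numClasses Z' := by
  have hP : (fun Y : RootedGraph => Y.G.IsTree ∧ RootedMutualMinor Y Z) =
      (fun Y : RootedGraph => Y.G.IsTree ∧ RootedMutualMinor Y Z') := by
    funext Y
    refine propext (and_congr_right fun hY => ?_)
    rw [rootedMutualMinor_iff hY hZ, rootedMutualMinor_iff hY hZ']
    exact ⟨fun h' => h'.trans h, fun h' => h'.trans h.symm⟩
  have key : ∀ P Q : RootedGraph → Prop, P = Q →
      Cardinal.mk (Quot (fun a b : {Y : RootedGraph // P Y} => RootedIso a.1 b.1)) =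
      Cardinal.mk (Quot (fun a b : {Y : RootedGraph // Q Y} => RootedIso a.1 b.1)) := by
    rintro P _ rfl; rfl
  exact key _ _ hP

/-! ### Full subtrees -/

theorem subtreeAt_isTree {X : RootedGraph} (hX : X.G.IsTree) (u : X.V) :
    (subtreeAt X u).G.IsTree ∧ ∀ x y : (subtreeAt X u).V,
      treeLE (subtreeAt X u).G (subtreeAt X u).root x y ↔ treeLE X.G X.root x.1 y.1 := by
  have hab : ∀ y : X.V, treeLE X.G X.root u y → ∀ x, treeLE X.G u x y →
      treeLE X.G X.root u x := by
    intro y hy x hx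
    simp only [treeLE_iff_dist hX] at *
    have := hX.connected.dist_triangle (u := X.root) (v := x) (w := y)
    have := hX.connected.dist_triangle (u := X.root) (v := u) (w := x)
    omega
  have hpath : ∀ y : (subtreeAt X u).V, ∃ q : (subtreeAt X u).G.Walk (subtreeAt X u).root y,
      q.IsPath ∧ ∀ x : (subtreeAt X u).V, x ∈ q.support ↔ treeLE X.G u x.1 y.1 := by
    intro y
    obtain ⟨p, hp, -⟩ := hX.connected.exists_path_of_dist u y.1
    have hs : ∀ x ∈ p.support, x ∈ {w : X.V | treeLE X.G X.root u w} := fun x hx =>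
      hab y.1 y.2 x ((treeLE_iff_mem hX p hp).2 hx)
    have hm : (p.induce _ hs).map (Embedding.induce _).toHom = p := Walk.map_induce _ _
    refine ⟨p.induce _ hs, ?_, fun x => ?_⟩
    · rw [← hm] at hp
      exact hp.of_map
    · rw [treeLE_iff_mem hX p hp]
      have hmem : x.1 ∈ p.support ↔ ∃ x' ∈ (p.induce _ hs).support, x'.1 = x.1 := by
        conv_lhs => rw [← hm]
        exact (Walk.support_map _ _).symm ▸ List.mem_map
      refine Iff.trans ?_ hmem.symm
      constructor
      · exact fun h => ⟨x, h, rfl⟩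
      · rintro ⟨x', h, he⟩
        have : x' = x := Subtype.ext he
        rwa [← this]
  have htree : (subtreeAt X u).G.IsTree := by
    have : Nonempty (subtreeAt X u).V := ⟨(subtreeAt X u).root⟩
    refine ⟨⟨fun a b => ?_⟩, hX.isAcyclic.induce _⟩
    obtain ⟨q, -⟩ := hpath a
    obtain ⟨q', -⟩ := hpath b
    exact ⟨q.reverse.append q'⟩
  refine ⟨htree, fun x y => ?_⟩
  obtain ⟨q, hq, hsupp⟩ := hpath y
  rw [treeLE_iff_mem htree q hq, hsupp]
  have hx : treeLE X.G X.root u x.1 := x.2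
  have hy : treeLE X.G X.root u y.1 := y.2
  simp only [treeLE_iff_dist hX] at *
  omega

/-! ### Joining a family of rooted graphs to a new root -/

/-- Adjacency in the graph obtained from the disjoint union of the `B i` by adding a vertex `none`
adjacent to all their roots. -/
inductive GraftAdj {ι : Type} (B : ι → RootedGraph) :
    Option (Σ i, (B i).V) → Option (Σ i, (B i).V) → Prop
  | up (i : ι) : GraftAdj B none (some ⟨i, (B i).root⟩)
  | down (i : ι) : GraftAdj B (some ⟨i, (B i).root⟩) none
  | inner (i : ι) (x y : (B i).V) : (B i).G.Adj x y → GraftAdj B (some ⟨i, x⟩) (some ⟨i, y⟩)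

/-- The disjoint union of the rooted graphs `B i` together with a new root, which is joined to the
root of each `B i`. -/
def graft {ι : Type} (B : ι → RootedGraph) : RootedGraph where
  V := Option (Σ i, (B i).V)
  G :=
    { Adj := GraftAdj B
      symm := ⟨fun _ _ h => by
        cases h with
        | up i => exact .down i
        | down i => exact .up i
        | inner i x y h => exact .inner i y x h.symm⟩
      loopless := ⟨fun _ h => by
        cases h with
        | inner i x _ h => exact h.ne rfl⟩ }
  root := none

section Graft

variable {ι : Type} {B : ι → RootedGraph}

theorem graftAdj_inner {i : ι} {x y : (B i).V} :
    GraftAdj B (some ⟨i, x⟩) (some ⟨i, y⟩) ↔ (B i).G.Adj x y := by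
  constructor
  · intro h
    cases h with
    | inner i x y h => exact h
  · exact .inner i x y

/-- The inclusion of a member of the family into the graft. -/
def graftHom (B : ι → RootedGraph) (i : ι) : (B i).G →g (graft B).G where
  toFun x := some ⟨i, x⟩
  map_rel' h := GraftAdj.inner i _ _ h

theorem graftHom_injective (i : ι) : Function.Injective (graftHom B i) := by
  intro x y h
  have h' : (some ⟨i, x⟩ : Option (Σ i, (B i).V)) = some ⟨i, y⟩ := h
  simpa using h'

theorem graft_isTree (hB : ∀ i, (B i).G.IsTree) : (graft B).G.IsTree := by
  have hreach : ∀ a, (graft B).G.Reachable (graft B).root a := by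
    rintro (_ | ⟨i, x⟩)
    · exact Reachable.refl _
    · have h1 : (graft B).G.Adj (graft B).root (graftHom B i (B i).root) := GraftAdj.up i
      exact h1.reachable.trans (((hB i).connected.preconnected (B i).root x).map (graftHom B i))
  have : Nonempty (graft B).V := ⟨(graft B).root⟩
  -- the height of a vertex is its depth in the graft
  refine isTree_of_height ⟨fun a b => (hreach a).symm.trans (hreach b)⟩
    (fun a : Option (Σ i, (B i).V) => a.elim 0 fun z => (B z.1).G.dist (B z.1).root z.2 + 1) ?_ ?_
  · intro a b h
    cases h with
    | up i => simp
    | down i => simp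
    | inner i x y h => simpa using (hB i).dist_ne_of_adj _ h
  · intro p q y hp hq hpy hqy
    cases hp with
    | up i =>
      cases hq with
      | up i => rfl
      | inner i x y h => simp at hqy
    | down i => simp at hpy
    | inner i x y h =>
      cases hq with
      | up i => simp at hpy
      | inner i x' y h' =>
        rw [parent_unique (r := (B i).root) (hB i) h h' (by simpa using hpy) (by simpa using hqy)]

theorem graft_treeLE_some (hB : ∀ i, (B i).G.IsTree) (i : ι) (y : (B i).V)
    (a : Option (Σ i, (B i).V)) :
    treeLE (graft B).G (graft B).root a (some ⟨i, y⟩) ↔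
      a = none ∨ ∃ x, treeLE (B i).G (B i).root x y ∧ a = some ⟨i, x⟩ := by
  obtain ⟨p, hp, -⟩ := (hB i).connected.exists_path_of_dist (B i).root y
  have hadj : (graft B).G.Adj (graft B).root (graftHom B i (B i).root) := GraftAdj.up i
  have hsup : ∀ b, b ∈ (p.map (graftHom B i)).support ↔ ∃ x ∈ p.support, graftHom B i x = b := by
    intro b
    rw [Walk.support_map, List.mem_map]
  have hpath : (Walk.cons hadj (p.map (graftHom B i))).IsPath := by
    rw [Walk.cons_isPath_iff]
    refine ⟨hp.map (graftHom_injective i), fun h => ?_⟩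
    obtain ⟨x, -, hx⟩ := (hsup _).1 h
    exact Option.some_ne_none _ hx
  refine (treeLE_iff_mem (graft_isTree hB) _ hpath).trans ?_
  refine List.mem_cons.trans (or_congr Iff.rfl ((hsup a).trans (exists_congr fun x => ?_)))
  rw [treeLE_iff_mem (hB i) p hp]
  exact and_congr Iff.rfl eq_comm

theorem graft_treeLE_none (hB : ∀ i, (B i).G.IsTree) (a : Option (Σ i, (B i).V)) :
    treeLE (graft B).G (graft B).root a none ↔ a = none := by
  constructor
  · exact fun h => treeLE_antisymm (graft_isTree hB) h (treeLE_root (graft_isTree hB) _)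
  · rintro rfl
    exact treeLE_refl _

theorem graft_ordEmb {B' : ι → RootedGraph} (hB : ∀ i, (B i).G.IsTree)
    (hB' : ∀ i, (B' i).G.IsTree) (h : ∀ i, OrdEmb (B i) (B' i)) :
    OrdEmb (graft B) (graft B') := by
  choose f hf using h
  refine ⟨fun a : Option (Σ i, (B i).V) => a.map fun z => ⟨z.1, f z.1 z.2⟩, ?_⟩
  rintro a (_ | ⟨i, y⟩)
  · refine (graft_treeLE_none hB a).trans (Iff.trans ?_ (graft_treeLE_none hB' _).symm)
    cases a <;> simp
  · refine (graft_treeLE_some hB i y a).trans (Iff.trans ?_ (graft_treeLE_some hB' i _ _).symm)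
    rcases a with _ | ⟨j, x⟩
    · simp
    · simp only [reduceCtorEq, false_or, Option.map_some]
      constructor
      · rintro ⟨x', hx', he⟩
        cases he
        exact ⟨_, (hf i _ _).1 hx', rfl⟩
      · rintro ⟨x', hx', he⟩
        rw [Option.some_inj, Sigma.mk.injEq] at he
        obtain ⟨rfl, he⟩ := he
        rw [heq_eq_eq] at he
        subst he
        exact ⟨x, (hf j _ _).2 hx', rfl⟩

theorem graft_push {ι' : Type} {B' : ι' → RootedGraph} (hB : ∀ i, (B i).G.IsTree)
    (φ : (graft B).G ≃g (graft B').G) (h0 : φ (graft B).root = (graft B').root) (i : ι) (i' : ι')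
    (hi : φ (some ⟨i, (B i).root⟩ : Option (Σ i, (B i).V)) =
      (some ⟨i', (B' i').root⟩ : Option (Σ i, (B' i).V))) (x : (B i).V) :
    ∃ y, φ (some ⟨i, x⟩ : Option (Σ i, (B i).V)) = (some ⟨i', y⟩ : Option (Σ i, (B' i).V)) := by
  obtain ⟨w⟩ := (hB i).connected.preconnected x (B i).root
  suffices H : ∀ (x z : (B i).V) (w : (B i).G.Walk x z), z = (B i).root →
      ∃ y, φ (some ⟨i, x⟩ : Option (Σ i, (B i).V)) = (some ⟨i', y⟩ : Option (Σ i, (B' i).V)) from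
    H _ _ w rfl
  intro x z w
  induction w with
  | nil => rintro rfl; exact ⟨_, hi⟩
  | @cons x y z h q ih =>
    intro hz
    obtain ⟨b, hb⟩ := ih hz
    have hadj : (graft B').G.Adj (φ (some ⟨i, x⟩ : Option (Σ i, (B i).V)))
        (φ (some ⟨i, y⟩ : Option (Σ i, (B i).V))) :=
      φ.map_adj_iff.2 (GraftAdj.inner i _ _ h)
    rw [hb] at hadj
    have hne : φ (some ⟨i, x⟩ : Option (Σ i, (B i).V)) ≠ (none : Option (Σ i, (B' i).V)) := by
      intro he
      exact Option.some_ne_none _ (φ.injective (he.trans h0.symm))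
    generalize φ (some ⟨i, x⟩ : Option (Σ i, (B i).V)) = c at hadj hne
    cases hadj with
    | up => exact absurd rfl hne
    | inner _ c _ _ => exact ⟨c, rfl⟩

/-- A root-preserving isomorphism of grafts maps members of one family isomorphically onto members
of the other. -/
theorem graft_iso {ι' : Type} {B' : ι' → RootedGraph} (hB : ∀ i, (B i).G.IsTree)
    (hB' : ∀ i, (B' i).G.IsTree) (h : RootedIso (graft B) (graft B')) (i : ι) :
    ∃ i', RootedIso (B i) (B' i') := by
  obtain ⟨φ, h0⟩ := h
  have h0' : φ.symm (graft B').root = (graft B).root := by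
    rw [← h0]; exact φ.symm_apply_apply _
  obtain ⟨i', hi⟩ : ∃ i', φ (some ⟨i, (B i).root⟩ : Option (Σ i, (B i).V)) =
      (some ⟨i', (B' i').root⟩ : Option (Σ i, (B' i).V)) := by
    have hadj : (graft B').G.Adj (φ (graft B).root)
        (φ (some ⟨i, (B i).root⟩ : Option (Σ i, (B i).V))) :=
      φ.map_adj_iff.2 (GraftAdj.up i)
    rw [h0] at hadj
    generalize φ (some ⟨i, (B i).root⟩ : Option (Σ i, (B i).V)) = c at hadj
    cases hadj with
    | up i' => exact ⟨i', rfl⟩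
  have hi' : φ.symm (some ⟨i', (B' i').root⟩ : Option (Σ i, (B' i).V)) =
      (some ⟨i, (B i).root⟩ : Option (Σ i, (B i).V)) := by
    rw [← hi]; exact φ.symm_apply_apply _
  choose g hg using graft_push hB φ h0 i i' hi
  choose g' hg' using graft_push hB' φ.symm h0' i' i hi'
  have hgg : ∀ x, g' (g x) = x := fun x => by
    have := hg' (g x)
    rw [← hg x] at this
    exact graftHom_injective i (this.symm.trans (φ.symm_apply_apply _))
  have hgg' : ∀ y, g (g' y) = y := fun y => by
    have := hg (g' y)
    rw [← hg' y] at this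
    exact graftHom_injective i' (this.symm.trans (φ.apply_symm_apply _))
  refine ⟨i', ⟨⟨g, g', hgg, hgg'⟩, ?_⟩, ?_⟩
  · intro a b
    have h1 : (graft B').G.Adj (φ (some ⟨i, a⟩ : Option (Σ i, (B i).V)))
        (φ (some ⟨i, b⟩ : Option (Σ i, (B i).V))) ↔ _ := φ.map_adj_iff
    rw [hg, hg] at h1
    exact graftAdj_inner.symm.trans (h1.trans graftAdj_inner)
  · exact graftHom_injective i' ((hg _).symm.trans hi)

end Graft

/-- A tree is equivalent to the graft of the full subtrees at the children of its root. -/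
theorem graft_children {X : RootedGraph} (hX : X.G.IsTree) :
    OrdEquiv (graft fun u : {u : X.V // X.G.Adj X.root u} => subtreeAt X u.1) X := by
  have hB := fun u : {u : X.V // X.G.Adj X.root u} => (subtreeAt_isTree hX u.1).1
  have hd : ∀ u : {u : X.V // X.G.Adj X.root u}, X.G.dist X.root u.1 = 1 := fun u =>
    SimpleGraph.dist_eq_one_iff_adj.2 u.2
  refine ordEmb_of_surjective (fun a : Option (Σ u : {u : X.V // X.G.Adj X.root u},
    (subtreeAt X u.1).V) => a.elim X.root fun z => z.2.1) ?_ ?_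
  · intro y
    by_cases hy : y = X.root
    · exact ⟨(none : Option _), hy.symm⟩
    · -- the first vertex after the root on the path to `y` is the child below `y`
      obtain ⟨w, hw, hl⟩ := hX.connected.exists_path_of_dist X.root y
      cases w with
      | nil => exact absurd rfl hy
      | @cons _ u _ hadj q =>
        have hle : treeLE X.G X.root u y := Or.inr ⟨_, hw, by simp⟩
        exact ⟨(some ⟨⟨u, hadj⟩, ⟨y, hle⟩⟩ : Option (Σ u : {u : X.V // X.G.Adj X.root u},
          (subtreeAt X u.1).V)), rfl⟩
  · rintro a (_ | ⟨u, y⟩)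
    · refine (graft_treeLE_none hB a).trans ?_
      rcases a with _ | ⟨u, x⟩
      · simpa using treeLE_refl _
      · simp only [reduceCtorEq, false_iff, Option.elim]
        intro h
        have h1 := treeLE_trans hX x.2 h
        rw [treeLE_iff_dist hX, hd, SimpleGraph.dist_self] at h1
        omega
    · refine (graft_treeLE_some hB u y a).trans ?_
      rcases a with _ | ⟨u', x⟩
      · simpa using treeLE_root hX _
      · simp only [reduceCtorEq, false_or, Option.elim]
        constructor
        · rintro ⟨x', hx', he⟩
          cases he
          exact ((subtreeAt_isTree hX u.1).2 _ _).1 hx'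
        · intro h
          obtain rfl : u' = u := by
            apply Subtype.ext
            rcases treeLE_chain hX (treeLE_trans hX x.2 h) y.2 with h1 | h1
            · exact treeLE_eq_of_dist_le hX h1 (by rw [hd, hd])
            · exact (treeLE_eq_of_dist_le hX h1 (by rw [hd, hd])).symm
          exact ⟨x, ((subtreeAt_isTree hX u'.1).2 _ _).2 h, rfl⟩

/-! ### Counting equivalence classes -/

/-- The case of a child `v` of the root: a tree `S` equivalent to `T_v` is sent to the graft in
which all child subtrees equivalent to `T_v` are replaced by `S`. -/
theorem numClasses_child_le {X : RootedGraph} (hX : X.G.IsTree) (v : X.V)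
    (hv : X.G.Adj X.root v) : numClasses (subtreeAt X v) ≤ numClasses X := by
  classical
  have hT := fun u => (subtreeAt_isTree hX u).1
  let B : RootedGraph → {u : X.V // X.G.Adj X.root u} → RootedGraph := fun S u =>
    if OrdEquiv (subtreeAt X u.1) (subtreeAt X v) then S else subtreeAt X u.1
  have hpos : ∀ S u, OrdEquiv (subtreeAt X u.1) (subtreeAt X v) → B S u = S :=
    fun S u h => if_pos h
  have hneg : ∀ S u, ¬ OrdEquiv (subtreeAt X u.1) (subtreeAt X v) → B S u = subtreeAt X u.1 :=
    fun S u h => if_neg h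
  have hBT : ∀ S, S.G.IsTree → ∀ u, (B S u).G.IsTree := by
    intro S hS u
    by_cases h : OrdEquiv (subtreeAt X u.1) (subtreeAt X v)
    · rw [hpos S u h]; exact hS
    · rw [hneg S u h]; exact hT _
  have hBe : ∀ S, OrdEquiv S (subtreeAt X v) → ∀ u, OrdEquiv (B S u) (subtreeAt X u.1) := by
    intro S hS u
    by_cases h : OrdEquiv (subtreeAt X u.1) (subtreeAt X v)
    · rw [hpos S u h]; exact hS.trans h.symm
    · rw [hneg S u h]; exact .refl _
  have hmem : ∀ S : RootedGraph, S.G.IsTree ∧ RootedMutualMinor S (subtreeAt X v) →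
      (graft (B S)).G.IsTree ∧ RootedMutualMinor (graft (B S)) X := by
    rintro S ⟨hS, hSv⟩
    have hSv' := (rootedMutualMinor_iff hS (hT v)).1 hSv
    have ht := graft_isTree (hBT S hS)
    refine ⟨ht, (rootedMutualMinor_iff ht hX).2 (OrdEquiv.trans ⟨?_, ?_⟩ (graft_children hX))⟩
    · exact graft_ordEmb (hBT S hS) (fun u => hT _) fun u => (hBe S hSv' u).1
    · exact graft_ordEmb (fun u => hT _) (hBT S hS) fun u => (hBe S hSv' u).2
  refine Cardinal.mk_le_of_injective (f := fun q => Quot.mk _ ⟨graft (B q.out.1), hmem _ q.out.2⟩) ?_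
  intro q q' h
  have hiso : RootedIso (graft (B q.out.1)) (graft (B q'.out.1)) :=
    (rootedIso_equivalence _).eqvGen_iff.1 (Quot.eqvGen_exact h)
  rw [← Quot.out_eq q, ← Quot.out_eq q']
  refine Quot.sound ?_
  obtain ⟨u, hu⟩ := graft_iso (hBT _ q.out.2.1) (hBT _ q'.out.2.1) hiso ⟨v, hv⟩
  rw [hpos _ _ (.refl _)] at hu
  by_cases hc : OrdEquiv (subtreeAt X u.1) (subtreeAt X v)
  · rwa [hpos _ _ hc] at hu
  · rw [hneg _ _ hc] at hu
    exact absurd ((hu.symm.ordEquiv (hT _) q.out.2.1).trans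
      ((rootedMutualMinor_iff q.out.2.1 (hT v)).1 q.out.2.2)) hc

theorem subtreeAt_subtreeAt {X : RootedGraph} (hX : X.G.IsTree) (p v : X.V)
    (h : treeLE X.G X.root p v) :
    OrdEquiv (subtreeAt (subtreeAt X p) ⟨v, h⟩) (subtreeAt X v) := by
  obtain ⟨hp, hpo⟩ := subtreeAt_isTree hX p
  refine ordEmb_of_surjective (X := subtreeAt (subtreeAt X p) ⟨v, h⟩) (Y := subtreeAt X v)
    (fun a => ⟨a.1.1, (hpo _ _).1 a.2⟩) ?_ ?_
  · intro y
    exact ⟨⟨⟨y.1, treeLE_trans hX h y.2⟩, (hpo _ _).2 y.2⟩, rfl⟩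
  · intro a b
    exact ((subtreeAt_isTree hp _).2 a b).trans ((hpo _ _).trans
      ((subtreeAt_isTree hX v).2 ⟨a.1.1, (hpo _ _).1 a.2⟩ ⟨b.1.1, (hpo _ _).1 b.2⟩).symm)

/-- For a rooted tree `(T, r)` and any vertex `v`, the number of isomorphism
classes of rooted trees mutually rooted-minor-equivalent to `(T_v, v)` is at most that
of `(T, r)`. -/
theorem stmt8 (X : RootedGraph) (hX : X.G.IsTree) (v : X.V) :
    numClasses (subtreeAt X v) ≤ numClasses X := by
  induction hn : X.G.dist X.root v generalizing v with
  | zero =>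
    obtain rfl : X.root = v := hX.connected.dist_eq_zero_iff.1 hn
    obtain ⟨ht, ho⟩ := subtreeAt_isTree hX X.root
    refine (numClasses_congr ht hX ?_).le
    exact ordEmb_of_surjective (X := subtreeAt X X.root) (fun a => a.1)
      (fun y => ⟨⟨y, treeLE_root hX y⟩, rfl⟩) ho
  | succ n ih =>
    have hne : X.root ≠ v := by
      rintro rfl
      simp at hn
    obtain ⟨p, hadj, -, hpv, hd⟩ := exists_parent hX (treeLE_root hX v) hne
    refine le_trans ?_ (ih p (by omega))
    have ht := (subtreeAt_isTree hX p).1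
    rw [← numClasses_congr (subtreeAt_isTree ht _).1 (subtreeAt_isTree hX v).1
      (subtreeAt_subtreeAt hX p v hpv)]
    exact numClasses_child_le ht _ hadj
end

section
/- Let T be a small tree and let inf(T) be the set of vertices of infinite degree. If μ is a model of T in T, then μ restricts to a model of the closure of inf(T) in itself; that is, for every v ∈ inf(T), the branch set μ(v) contains a vertex of infinite degree. -/
/-!
The argument is a star-comb argument. Suppose `v` has infinite degree but every vertex of the
branch set `S = μ v` has finite degree. The infinitely many branch sets adjacent to `S` are
disjoint, so the set `A` of vertices of `S` with a neighbour outside `S` is infinite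
(`infinite_boundary`). In the connected, locally finite graph `T[S]`, König's lemma yields a
geodesic ray from a root `r` all of whose vertices lie on geodesics from `r` to infinitely many
elements of `A` (`exists_geodesic_ray`). By smallness, this ray is bare from some index on. Take a
geodesic from `r` to some `a ∈ A` through a bare vertex of the ray. It can neither leave the ray nor
end on it later on, since either would create a vertex of degree at least three on the ray; so
it follows the ray forever, which is absurd.
-/

open SimpleGraph

/-- The elements of `A` "beyond" `x`: those reached from `r` by a geodesic through `x`. -/
def beyond {W : Type*} (H : SimpleGraph W) (r : W) (A : Set W) (x : W) : Set W :=
  {a ∈ A | H.dist r a = H.dist r x + H.dist x a}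

/-- A geodesic from `r` through `x` to `a ≠ x` continues through a neighbour of `x`. -/
lemma exists_adj_mem_beyond {W : Type*} {H : SimpleGraph W} (hH : H.Connected) {r : W}
    {A : Set W} {x a : W} (ha : a ∈ beyond H r A x) (hne : a ≠ x) :
    ∃ y, H.Adj x y ∧ H.dist r y = H.dist r x + 1 ∧ a ∈ beyond H r A y := by
  obtain ⟨haA, had⟩ := ha
  obtain ⟨p, hp⟩ := hH.exists_walk_length_eq_dist x a
  cases p with
  | nil => exact absurd rfl hne
  | @cons _ y _ h q =>
    have h1 : H.dist y a ≤ q.length := dist_le q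
    have h2 : H.dist r a ≤ H.dist r y + H.dist y a := hH.dist_triangle
    have h3 : H.dist r y ≤ H.dist r x + H.dist x y := hH.dist_triangle
    have h4 : H.dist x y = 1 := dist_eq_one_iff_adj.2 h
    rw [Walk.length_cons] at hp
    exact ⟨y, h, by omega, haA, by omega⟩

/-- König's lemma, relative to an infinite vertex set `A` of a connected locally finite graph. -/
lemma exists_geodesic_ray {W : Type*} {H : SimpleGraph W} (hH : H.Connected)
    (hfin : ∀ x, (H.neighborSet x).Finite) (r : W) {A : Set W} (hA : A.Infinite) :
    ∃ f : ℕ → W, (∀ n, H.Adj (f n) (f (n + 1))) ∧ (∀ n, H.dist r (f n) = n) ∧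
      ∀ n, (beyond H r A (f n)).Infinite := by
  have step : ∀ x : {x // (beyond H r A x).Infinite}, ∃ y : {x // (beyond H r A x).Infinite},
      H.Adj x.1 y.1 ∧ H.dist r y.1 = H.dist r x.1 + 1 := by
    rintro ⟨x, hx⟩
    by_contra! hcon
    refine hx (Set.Finite.subset (s := {x} ∪ ⋃ y ∈ {y ∈ H.neighborSet x |
      H.dist r y = H.dist r x + 1}, beyond H r A y) ?_ ?_)
    · refine (Set.finite_singleton x).union (((hfin x).subset (Set.sep_subset _ _)).biUnion ?_)
      rintro y ⟨hy, hd⟩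
      by_contra hinf
      exact hcon ⟨y, hinf⟩ hy hd
    · intro a ha
      by_cases hax : a = x
      · exact Or.inl hax
      · obtain ⟨y, hxy, hd, hay⟩ := exists_adj_mem_beyond hH ha hax
        exact Or.inr (Set.mem_biUnion (show y ∈ {y ∈ H.neighborSet x | _} from ⟨hxy, hd⟩) hay)
  choose g hg using step
  have hr : (beyond H r A r).Infinite := by
    have : beyond H r A r = A := by ext a; simp [beyond]
    rwa [this]
  let F : ℕ → {x // (beyond H r A x).Infinite} := fun n => Nat.rec ⟨r, hr⟩ (fun _ x => g x) n
  refine ⟨fun n => (F n).1, fun n => (hg (F n)).1, fun n => ?_, fun n => (F n).2⟩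
  induction n with
  | zero => exact dist_self
  | succ n ih => exact (hg (F n)).2.trans (by rw [ih])

/-- A branch set of a vertex of infinite degree, if it has only vertices of finite degree, has
infinitely many vertices with a neighbour outside it. -/
lemma infinite_boundary {V : Type*} {T : SimpleGraph V} {μ : V → Set V} (hμ : IsModel T T μ)
    {v : V} (hv : eDeg T v = ⊤) (hfin : ∀ w ∈ μ v, (T.neighborSet w).Finite) :
    {a : μ v | ∃ b ∉ μ v, T.Adj a b}.Infinite := by
  intro hA
  have hN : (T.neighborSet v).Infinite := Set.encard_eq_top_iff.1 hv
  have : Infinite (T.neighborSet v) := hN.to_subtype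
  choose a ha b hb hab using fun w : T.neighborSet v => hμ.edge v w w.2
  have hinj : Function.Injective b := by
    intro w w' h
    by_contra hne
    exact Set.disjoint_left.1 (hμ.disjoint w w' fun h' => hne (Subtype.ext h')) (hb w)
      (h ▸ hb w')
  refine Set.infinite_range_of_injective hinj
    ((hA.biUnion fun x _ => hfin x.1 x.2).subset ?_)
  rintro _ ⟨w, rfl⟩
  have hout : b w ∉ μ v := fun h =>
    Set.disjoint_left.1 (hμ.disjoint v w (T.ne_of_adj w.2)) h (hb w)
  exact Set.mem_biUnion (show (⟨a w, ha w⟩ : μ v) ∈ {a : μ v | ∃ b ∉ μ v, T.Adj a b} from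
    ⟨b w, hout, hab w⟩) (hab w)

lemma eq_or_eq_of_eDeg_eq_two {V : Type*} {T : SimpleGraph V} {x p q z : V}
    (h : eDeg T x = 2) (hp : T.Adj x p) (hq : T.Adj x q) (hpq : p ≠ q) (hz : T.Adj x z) :
    z = p ∨ z = q := by
  obtain ⟨s, t, -, hst⟩ := Set.encard_eq_two.1 h
  have key : ∀ y, T.Adj x y → y = s ∨ y = t := fun y hy => by
    have : y ∈ T.neighborSet x := hy
    rwa [hst] at this
  have := key p hp
  have := key q hq
  have := key z hz
  grind

/-- For a small tree `T` and a model `μ` of `T` in `T`, the branch set of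
every infinite-degree vertex contains an infinite-degree vertex; hence `μ` restricts to a
model of the closure of `inf(T)` in itself. -/
theorem stmt12 {V : Type*} (T : SimpleGraph V) (hT : T.IsTree) (hsmall : IsSmall T)
    (μ : V → Set V) (hμ : IsModel T T μ) :
    ∀ v, eDeg T v = ⊤ → ∃ w ∈ μ v, eDeg T w = ⊤ := by
  intro v hv
  by_contra! hcon
  have hfin : ∀ w ∈ μ v, (T.neighborSet w).Finite := fun w hw =>
    Set.encard_ne_top_iff.1 (hcon w hw)
  have hA := infinite_boundary hμ hv hfin
  set A : Set (μ v) := {a | ∃ b ∉ μ v, T.Adj a b}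
  set H := T.induce (μ v)
  have hH : H.Connected := hμ.connected v
  obtain ⟨r⟩ := hH.nonempty
  have hHfin : ∀ x, (H.neighborSet x).Finite := fun x =>
    Set.Finite.preimage Subtype.val_injective.injOn (hfin x.1 x.2)
  obtain ⟨f, hadj, hdist, hinf⟩ := exists_geodesic_ray hH hHfin r hA
  have hf : Function.Injective f := fun m n h => by rw [← hdist m, h, hdist n]
  obtain ⟨M, hM⟩ := hsmall (fun n => (f n).1) ⟨Subtype.val_injective.comp hf, hadj⟩
  obtain ⟨a, ha⟩ := (hinf (M + 1)).nonempty
  -- Bareness of the ray at indices above `M` forces the geodesic to `a` to follow it forever.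
  have follow : ∀ k, a ∈ beyond H r A (f (M + 1 + k)) := by
    intro k
    induction k with
    | zero => exact ha
    | succ k ih =>
      have hback : T.Adj (f (M + 1 + k)).1 (f (M + k)).1 := by
        have := hadj (M + k)
        rw [show M + k + 1 = M + 1 + k by omega] at this
        exact this.symm
      have hforw : T.Adj (f (M + 1 + k)).1 (f (M + 1 + k + 1)).1 := hadj (M + 1 + k)
      have hne : (f (M + k)).1 ≠ (f (M + 1 + k + 1)).1 := fun h => by
        have := hf (Subtype.val_injective h)
        omega
      have hnbr := fun z => eq_or_eq_of_eDeg_eq_two (z := z) (hM (M + 1 + k) (by omega))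
        hback hforw hne
      have hax : a ≠ f (M + 1 + k) := by
        rintro rfl
        obtain ⟨b, hb, hab⟩ := ih.1
        rcases hnbr b hab with rfl | rfl
        · exact hb (f (M + k)).2
        · exact hb (f (M + 1 + k + 1)).2
      obtain ⟨y, hxy, hd, hay⟩ := exists_adj_mem_beyond hH ih hax
      rcases hnbr y.1 hxy with h | h
      · rw [Subtype.val_injective h, hdist, hdist] at hd
        omega
      · rwa [Subtype.val_injective h] at hay
  have h := (follow (H.dist r a)).2
  rw [hdist] at h
  omega
end
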